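/- arXiv:1510.06181 — 4 statements merged into one kernel-verified Lean document; each statement's English description precedes it below -/
import Mathlib

section
/- Let R be an integral domain with fraction field K and let A be a finite flat R-algebra that is finitely presented as an R-module and has split fibers, i.e., the fiber A(p) is a split k(p)-algebra for every p ∈ Spec(R). Then the map Spec(R) → ℕ, p ↦ #Bl(A(p)), is lower semicontinuous, Spec(R) = ⨿_{n∈ℕ} {p : #Bl(A(p)) = n} is a partition into locally closed subsets, and max_{p} #Bl(A(p)) = #Bl(A^K). If R is additionally universally catenary, japanese, and noetherian, then BlEx(A) := {p : #Bl(A(p)) < #Bl(A^K)} is either empty or pure of codimension one in Spec(R) with finitely many irreducible components. -/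
open TensorProduct

section BlockDefs
variable {B : Type*} [Ring B]
def IsBlockIdem (e : B) : Prop :=
  IsIdempotentElem e ∧ e ≠ 0 ∧ (∀ x : B, e * x = x * e) ∧
    ∀ f g : B, (∀ x : B, f * x = x * f) → (∀ x : B, g * x = x * g) →
      IsIdempotentElem f → IsIdempotentElem g → f * g = 0 → f + g = e → f = 0 ∨ g = 0
end BlockDefs

noncomputable def numBlocks (B : Type*) [Ring B] : ℕ := Nat.card {e : B // IsBlockIdem e}

def IsSplitAlgebra (K : Type u) (B : Type v) [Field K] [Ring B] [Algebra K B] : Prop :=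
  ∀ (S : Type v) [AddCommGroup S] [Module B S], IsSimpleModule B S →
    ∀ f : S →ₗ[B] S, ∃ k : K, ∀ s : S, f s = algebraMap K B k • s

noncomputable abbrev resFieldAt (R : Type*) [CommRing R] (p : PrimeSpectrum R) :=
  IsLocalRing.ResidueField (Localization.AtPrime p.asIdeal)

def IsIrredCompOf {X : Type*} [TopologicalSpace X] (C s : Set X) : Prop :=
  IsIrreducible C ∧ C ⊆ s ∧ ∀ C' : Set X, IsIrreducible C' → C' ⊆ s → C ⊆ C' → C' = C

def IsReducedWeilDivisor {R : Type*} [CommRing R] (s : Set (PrimeSpectrum R)) : Prop :=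
  {C | IsIrredCompOf C s}.Finite ∧
    ∀ C, IsIrredCompOf C s → ∃ q : PrimeSpectrum R, closure C = closure {q} ∧ Order.height q = 1

def IsCatenaryRing (R : Type u) [CommRing R] : Prop :=
  ∀ c d : LTSeries (PrimeSpectrum R), c.head = d.head → c.last = d.last →
    (∀ i : Fin c.length, c i.castSucc ⋖ c i.succ) →
    (∀ i : Fin d.length, d i.castSucc ⋖ d i.succ) →
    c.length = d.length

def IsUniversallyCatenary (R : Type u) [CommRing R] : Prop :=
  ∀ n : ℕ, IsCatenaryRing (MvPolynomial (Fin n) R)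

/-- A domain is japanese if its integral closure in every finite extension of its fraction
field is a finite module. -/
def IsJapaneseRing (R : Type u) [CommRing R] [IsDomain R] : Prop :=
  ∀ (L : Type u) [Field L] [Algebra (FractionRing R) L] [FiniteDimensional (FractionRing R) L]
    [Algebra R L] [IsScalarTower R (FractionRing R) L],
    Module.Finite R (integralClosure R L)

structure IsOC {B : Type*} [Ring B] {ι : Type*} (e : ι → B) : Prop where
  idem : ∀ i, IsIdempotentElem (e i)
  cent : ∀ i x, e i * x = x * e i
  ne : ∀ i, e i ≠ 0
  orth : ∀ i j, i ≠ j → e i * e j = 0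

section A
variable {F B : Type*} [Field F] [Ring B] [Algebra F B] [Module.Finite F B]

theorem block_orth {B : Type*} [Ring B] {e f : B} (he : IsBlockIdem e) (hf : IsBlockIdem f)
    (hne : e ≠ f) : e * f = 0 := by
  have key : ∀ {e f : B}, IsBlockIdem e → IsBlockIdem f → e * f ≠ 0 → e * f = e := by
    intro e f he hf h0
    obtain ⟨h1, h2, h3, h4⟩ := he
    obtain ⟨g1, g2, g3, g4⟩ := hf
    have h1' : e * e = e := h1
    have g1' : f * f = f := g1
    have := h4 (e * f) (e - e * f) ?_ ?_ ?_ ?_ ?_ ?_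
    · rcases this with h | h
      · exact absurd h h0
      · exact (sub_eq_zero.mp h).symm
    · intro x; rw [mul_assoc, g3, ← mul_assoc, h3, mul_assoc]
    · intro x; rw [sub_mul, mul_sub, h3 x, mul_assoc, g3 x, ← mul_assoc, h3 x, mul_assoc]
    · change e * f * (e * f) = e * f
      rw [mul_assoc, ← mul_assoc f e f, g3 e, mul_assoc e f f, g1', ← mul_assoc, h1']
    · change (e - e * f) * (e - e * f) = e - e * f
      have a1 : e * (e * f) = e * f := by rw [← mul_assoc, h1']
      have a2 : e * f * e = e * f := by rw [mul_assoc, g3, a1]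
      have a3 : e * f * (e * f) = e * f := by rw [← mul_assoc, a2, mul_assoc, g1']
      rw [sub_mul, mul_sub, mul_sub, h1', a1, a2, a3]; abel
    · have a1 : e * f * e = e * f := by rw [mul_assoc, g3, ← mul_assoc, h1']
      have a3 : e * f * (e * f) = e * f := by rw [← mul_assoc, a1, mul_assoc, g1']
      rw [mul_sub, a1, a3, sub_self]
    · abel
  by_contra h0
  have h1 := key he hf h0
  have h2 := key hf he (by rwa [hf.2.2.1 e])
  apply hne
  rw [← h1, he.2.2.1 f, h2]

theorem IsOC.linearIndependent {ι : Type*} {e : ι → B} (h : IsOC e) :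
    LinearIndependent F e := by
  rw [linearIndependent_iff']
  intro s g hg i hi
  have := congrArg (fun z => z * e i) hg
  simp only [zero_mul, Finset.sum_mul, smul_mul_assoc] at this
  rw [Finset.sum_eq_single i] at this
  · rw [(h.idem i).eq] at this
    exact (smul_eq_zero.mp this).resolve_right (h.ne i)
  · intro j _ hj
    rw [h.orth j i hj, smul_zero]
  · intro h; exact absurd hi h

theorem blocks_isOC (B : Type*) [Ring B] :
    IsOC (fun e : {e : B // IsBlockIdem e} => e.1) where
  idem i := i.2.1
  cent i := i.2.2.2.1
  ne i := i.2.2.1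
  orth i j h := block_orth i.2 j.2 (fun h' => h (Subtype.ext h'))

theorem exists_block (F : Type*) {B : Type*} [Field F] [Ring B] [Algebra F B] [Module.Finite F B]
    (n : ℕ) : ∀ e : B, IsIdempotentElem e →
    (∀ x, e * x = x * e) → e ≠ 0 → Module.finrank F (LinearMap.range (LinearMap.mulLeft F e)) ≤ n →
    ∃ b, IsBlockIdem b ∧ e * b = b := by
  induction n with
  | zero =>
    intro e he hc h0 hn
    exfalso
    have h1 : LinearMap.range (LinearMap.mulLeft F e) = ⊥ :=
      Submodule.finrank_eq_zero.mp (Nat.le_zero.mp hn)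
    have h2 : e ∈ LinearMap.range (LinearMap.mulLeft F e) := ⟨1, by simp⟩
    rw [h1] at h2
    exact h0 (by simpa using h2)
  | succ n ih =>
    intro e he hc h0 hn
    by_cases hb : IsBlockIdem e
    · exact ⟨e, hb, he⟩
    · have : ∃ f g : B, (∀ x : B, f * x = x * f) ∧ (∀ x : B, g * x = x * g) ∧
          IsIdempotentElem f ∧ IsIdempotentElem g ∧ f * g = 0 ∧ f + g = e ∧ f ≠ 0 ∧ g ≠ 0 := by
        by_contra hcon
        push Not at hcon
        refine hb ⟨he, h0, hc, fun f g h1 h2 h3 h4 h5 h6 => ?_⟩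
        by_cases hf : f = 0
        · exact Or.inl hf
        · exact Or.inr (hcon f g h1 h2 h3 h4 h5 h6 hf)
      obtain ⟨f, g, h1, h2, h3, h4, h5, h6, hf, hg⟩ := this
      have ef : e * f = f := by rw [← h6, add_mul, h3.eq, ← h1, h5, add_zero]
      have eg : e * g = g := by rw [← h6, add_mul, h4.eq, h5, zero_add]
      have hlt : LinearMap.range (LinearMap.mulLeft F f) < LinearMap.range (LinearMap.mulLeft F e) := by
        refine lt_of_le_of_ne ?_ ?_
        · rintro _ ⟨x, rfl⟩
          exact ⟨f * x, by simp [← mul_assoc, ef]⟩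
        · intro heq
          have : g ∈ LinearMap.range (LinearMap.mulLeft F e) := ⟨g, by simpa using eg⟩
          rw [← heq] at this
          obtain ⟨x, hx⟩ := this
          simp only [LinearMap.mulLeft_apply] at hx
          apply hg
          have : f * g = g := by rw [← hx, ← mul_assoc, h3.eq]
          rw [← this, h5]
      obtain ⟨b, hb1, hb2⟩ := ih f h3 h1 hf
        (by have := Submodule.finrank_lt_finrank_of_lt hlt; omega)
      exact ⟨b, hb1, by rw [← hb2, ← mul_assoc, ef]⟩

theorem finite_blocks (F B : Type*) [Field F] [Ring B] [Algebra F B] [Module.Finite F B] :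
    Finite {e : B // IsBlockIdem e} :=
  ((blocks_isOC B).linearIndependent (F := F)).finite

theorem IsOC.card_le (F : Type*) {B : Type*} [Field F] [Ring B] [Algebra F B] [Module.Finite F B]
    {ι : Type*} [Fintype ι] {e : ι → B} (h : IsOC e) : Fintype.card ι ≤ numBlocks B := by
  have := finite_blocks F B
  choose b hb1 hb2 using fun i => exists_block F _ (e i) (h.idem i) (h.cent i) (h.ne i) le_rfl
  rw [← Nat.card_eq_fintype_card]
  refine Nat.card_le_card_of_injective (fun i => (⟨b i, hb1 i⟩ : {e : B // IsBlockIdem e})) ?_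
  intro i j hij
  by_contra hne
  have hij' : b i = b j := congrArg Subtype.val hij
  apply (hb1 i).2.1
  have h1 : b i = e i * (e j * b i) := by
    conv_rhs => rw [hij', hb2 j, ← hij', hb2 i]
  rw [h1, ← mul_assoc, h.orth i j hne, zero_mul]

theorem exists_isOC (F B : Type*) [Field F] [Ring B] [Algebra F B] [Module.Finite F B] :
    ∃ e : Fin (numBlocks B) → B, IsOC e := by
  have := finite_blocks F B
  let σ : Fin (numBlocks B) ≃ {e : B // IsBlockIdem e} := (Finite.equivFin _).symm
  have h := blocks_isOC B
  exact ⟨fun i => (σ i).1, fun i => h.idem _, fun i => h.cent _, fun i => h.ne _,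
    fun i j hij => h.orth _ _ (fun h' => hij (σ.injective h'))⟩

theorem IsOC.map {B C : Type*} [Ring B] [Ring C] {ι : Type*} {e : ι → B} (h : IsOC e)
    (φ : B →+* C) (hφ : Function.Injective φ)
    (hc : ∀ z : B, (∀ x, z * x = x * z) → ∀ x, φ z * x = x * φ z) : IsOC (fun i => φ (e i)) where
  idem i := (h.idem i).map φ
  cent i := hc _ (h.cent i)
  ne i h0 := h.ne i (hφ (by rw [h0, map_zero]))
  orth i j hij := by rw [← map_mul, h.orth i j hij, map_zero]

theorem IsOC.mem_of_card (F : Type*) {B : Type*} [Field F] [Ring B] [Algebra F B]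
    [Module.Finite F B] {e : Fin (numBlocks B) → B} (h : IsOC e) (H : AddSubgroup B)
    (hH : ∀ i, e i ∈ H) (u : B) (hu : IsIdempotentElem u) (hc : ∀ x, u * x = x * u) : u ∈ H := by
  classical
  have hsum : ∑ i, e i = 1 := by
    by_contra hne
    have hmul : ∀ i, (∑ j, e j) * e i = e i := by
      intro i
      rw [Finset.sum_mul, Finset.sum_eq_single i]
      · exact h.idem i
      · intro j _ hj; exact h.orth j i hj
      · simp
    have hmul' : ∀ i, e i * (∑ j, e j) = e i := fun i => by rw [h.cent, hmul]
    have hss : (∑ j, e j) * (∑ j, e j) = ∑ j, e j := by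
      conv_lhs => rw [Finset.mul_sum]
      simp [hmul]
    have hoc : IsOC (fun o : Option (Fin (numBlocks B)) => o.elim (1 - ∑ j, e j) e) := by
      refine ⟨?_, ?_, ?_, ?_⟩
      · rintro (_ | i)
        · exact IsIdempotentElem.one_sub hss
        · exact h.idem i
      · rintro (_ | i) x
        · simp [sub_mul, mul_sub, Finset.sum_mul, Finset.mul_sum, h.cent]
        · exact h.cent i x
      · rintro (_ | i)
        · exact fun h0 => hne (sub_eq_zero.mp h0).symm
        · exact h.ne i
      · rintro (_ | i) (_ | j) hij
        · exact absurd rfl hij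
        · simp [sub_mul, hmul]
        · simp [mul_sub, hmul']
        · exact h.orth i j (fun h' => hij (by rw [h']))
    have := hoc.card_le F
    simp at this
  have key : ∀ i, u * e i = 0 ∨ u * e i = e i := by
    intro i
    by_contra hne
    push Not at hne
    have hu' : u * u = u := hu
    have hue : ∀ j, u * e j = e j * u := fun j => hc _
    have hoc : IsOC (fun o : Option (Fin (numBlocks B)) => o.elim (u * e i)
        (Function.update e i ((1 - u) * e i))) := by
      have hI : IsIdempotentElem (u * e i) := by
        change u * e i * (u * e i) = u * e i
        rw [← mul_assoc, mul_assoc u (e i) u, ← hue, ← mul_assoc, hu', mul_assoc, (h.idem i).eq]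
      have hI2 : IsIdempotentElem ((1 - u) * e i) := by
        have : Commute (1 - u) (e i) := by
          change (1 - u) * e i = e i * (1 - u)
          rw [sub_mul, mul_sub, hue]; simp
        exact IsIdempotentElem.mul_of_commute this hu.one_sub (h.idem i)
      have hc1 : ∀ x, u * e i * x = x * (u * e i) := by
        intro x; rw [mul_assoc, h.cent, ← mul_assoc, hc, mul_assoc]
      have hc2 : ∀ x, (1 - u) * e i * x = x * ((1 - u) * e i) := by
        intro x; rw [sub_mul, sub_mul, mul_sub, hc1, one_mul, h.cent]
      have ho : u * e i * ((1 - u) * e i) = 0 := by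
        rw [sub_mul, mul_sub, hI.eq, one_mul, mul_assoc, (h.idem i).eq, sub_self]
      refine ⟨?_, ?_, ?_, ?_⟩
      · rintro (_ | j)
        · exact hI
        · by_cases hj : j = i
          · subst hj; simpa using hI2
          · simpa [hj] using h.idem j
      · rintro (_ | j) x
        · exact hc1 x
        · by_cases hj : j = i
          · subst hj; simpa using hc2 x
          · simpa [hj] using h.cent j x
      · rintro (_ | j)
        · exact hne.1
        · by_cases hj : j = i
          · subst hj
            intro h0
            simp only [Option.elim_some, Function.update_self, sub_mul, one_mul] at h0
            exact hne.2 (sub_eq_zero.mp h0).symm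
          · simpa [hj] using h.ne j
      · have hx : ∀ j, j ≠ i → u * e i * e j = 0 := fun j hj => by
          rw [mul_assoc, h.orth i j (Ne.symm hj), mul_zero]
        have hy : ∀ j, j ≠ i → (1 - u) * e i * e j = 0 := fun j hj => by
          rw [mul_assoc, h.orth i j (Ne.symm hj), mul_zero]
        rintro (_ | j) (_ | k) hjk
        · exact absurd rfl hjk
        · by_cases hk : k = i
          · subst hk; simpa using ho
          · simpa [hk] using hx k hk
        · by_cases hj : j = i
          · subst hj; simp only [Option.elim_some, Function.update_self, Option.elim_none]
            rw [← hc1, ho]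
          · simp only [Option.elim_some, Function.update_of_ne hj, Option.elim_none]
            rw [← hc1, hx j hj]
        · have hjk' : j ≠ k := fun h' => hjk (by rw [h'])
          by_cases hj : j = i
          · subst hj
            simp only [Option.elim_some, Function.update_self, Function.update_of_ne (Ne.symm hjk')]
            exact hy k (Ne.symm hjk')
          · by_cases hk : k = i
            · subst hk
              simp only [Option.elim_some, Function.update_self, Function.update_of_ne hj]
              rw [h.cent, hy j hj]
            · simp only [Option.elim_some, Function.update_of_ne hj, Function.update_of_ne hk]
              exact h.orth j k hjk'
    have := hoc.card_le F
    simp at this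
  have : u = ∑ i, u * e i := by rw [← Finset.mul_sum, hsum, mul_one]
  rw [this]
  refine H.sum_mem fun i _ => ?_
  rcases key i with h1 | h1 <;> rw [h1]
  · exact H.zero_mem
  · exact hH i
end A

theorem split_center {k : Type u} {B : Type v} [Field k] [Ring B] [Algebra k B] [Module.Finite k B]
    (hs : IsSplitAlgebra k B) (m : Ideal (Subalgebra.center k B)) [hm : m.IsMaximal]
    (z : Subalgebra.center k B) :
    ∃ c : k, z - algebraMap k (Subalgebra.center k B) c ∈ m := by
  have : Module.Finite (Subalgebra.center k B) B :=
    Module.Finite.of_restrictScalars_finite k (Subalgebra.center k B) B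
  let I : Ideal B := Ideal.span ((fun z : Subalgebra.center k B => (z : B)) '' (m : Set _))
  have hI : I ≠ ⊤ := by
    intro htop
    have h1 : ∀ x ∈ I, x ∈ (m • (⊤ : Submodule (Subalgebra.center k B) B)) := by
      intro x hx
      refine Submodule.span_induction ?_ ?_ ?_ ?_ hx
      · rintro _ ⟨z, hz, rfl⟩
        have : (z : B) = z • (1 : B) := by rw [Subalgebra.smul_def]; simp
        change (z : B) ∈ _
        rw [this]
        exact Submodule.smul_mem_smul hz trivial
      · exact Submodule.zero_mem _
      · intro x y _ _ hx hy; exact Submodule.add_mem _ hx hy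
      · intro b x _ hx
        refine Submodule.smul_induction_on hx ?_ ?_
        · intro r hr n _
          have : b • r • n = r • (b * n) := by
            rw [Subalgebra.smul_def, Subalgebra.smul_def, smul_eq_mul, smul_eq_mul, smul_eq_mul,
              ← mul_assoc, ← mul_assoc, (Subalgebra.mem_center_iff.mp r.2 b)]
          rw [this]
          exact Submodule.smul_mem_smul hr trivial
        · intro x y hx hy; rw [smul_add]; exact Submodule.add_mem _ hx hy
    have h2 : (⊤ : Submodule (Subalgebra.center k B) B) ≤ m • ⊤ := by
      intro x _; exact h1 x (by rw [htop]; trivial)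
    obtain ⟨r, hr, hr0⟩ := Submodule.exists_sub_one_mem_and_smul_eq_zero_of_fg_of_le_smul m ⊤
      Module.Finite.fg_top h2
    have h3 := hr0 1 trivial
    have h4 : r = 0 := by
      apply Subtype.ext
      rw [Subalgebra.smul_def] at h3; simpa using h3
    have h6 := m.sub_mem (show r ∈ m by rw [h4]; exact m.zero_mem) hr
    refine hm.ne_top ((Ideal.eq_top_iff_one m).mpr ?_)
    convert h6 using 1
    exact (sub_sub_cancel _ _).symm
  obtain ⟨M, hM, hIM⟩ := Ideal.exists_le_maximal I hI
  have hS : IsSimpleModule B (B ⧸ M) := isSimpleModule_iff_isCoatom.mpr hM.out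
  let f : (B ⧸ M) →ₗ[B] (B ⧸ M) :=
    { toFun := fun s => (z : B) • s
      map_add' := fun s t => smul_add _ _ _
      map_smul' := fun b s => by
        simp only [RingHom.id_apply]
        rw [← mul_smul, ← mul_smul, Subalgebra.mem_center_iff.mp z.2 b] }
  obtain ⟨c, hc⟩ := hs (B ⧸ M) hS f
  refine ⟨c, ?_⟩
  have h1 : (z : B) - algebraMap k B c ∈ M := by
    have : (z : B) • (Submodule.Quotient.mk 1 : B ⧸ M) =
      algebraMap k B c • (Submodule.Quotient.mk 1 : B ⧸ M) := hc (Submodule.Quotient.mk 1)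
    rw [← sub_eq_zero, ← sub_smul, ← Submodule.Quotient.mk_smul,
      Submodule.Quotient.mk_eq_zero] at this
    simpa using this
  by_contra hz
  obtain ⟨w, hw⟩ := hm.exists_inv hz
  obtain ⟨y, hy, hyw⟩ := hw
  apply hM.ne_top
  rw [Ideal.eq_top_iff_one]
  have h2 : (y : B) ∈ M := hIM (Ideal.subset_span ⟨y, hy, rfl⟩)
  have h3 : (w : B) * ((z : B) - algebraMap k B c) ∈ M := M.mul_mem_left _ h1
  have h4 := congrArg Subtype.val hyw
  simp only [Subalgebra.coe_add, Subalgebra.coe_mul, Subalgebra.coe_sub, Subalgebra.coe_one,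
    Subalgebra.coe_algebraMap] at h4
  rw [← h4]
  exact M.add_mem h3 h2

theorem comm_descend {k L Z : Type*} [Field k] [Field L] [Algebra k L] [CommRing Z] [Algebra k Z]
    [Module.Finite k Z] (hs : ∀ m : Ideal Z, m.IsMaximal → ∀ z : Z, ∃ c : k, z - algebraMap k Z c ∈ m)
    (u : L ⊗[k] Z) (hu : IsIdempotentElem u) :
    ∃ f : Z, IsIdempotentElem f ∧ u = (1 : L) ⊗ₜ[k] f := by
  have : IsArtinianRing Z := IsArtinianRing.of_finite k Z
  let i : Z →+* L ⊗[k] Z := (Algebra.TensorProduct.includeRight : Z →ₐ[k] L ⊗[k] Z).toRingHom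
  have hi : ∀ z, i z = 1 ⊗ₜ z := fun z => rfl
  have key : ∀ m : Ideal Z, m.IsMaximal → ∀ w : L ⊗[k] Z, ∃ l : L, w - l ⊗ₜ 1 ∈ m.map i := by
    intro m hm w
    induction w with
    | zero => exact ⟨0, by simp⟩
    | tmul l z =>
      obtain ⟨c, hc⟩ := hs m hm z
      refine ⟨c • l, ?_⟩
      have : l ⊗ₜ[k] z - (c • l) ⊗ₜ[k] (1 : Z) = (l ⊗ₜ 1) * i (z - algebraMap k Z c) := by
        rw [hi, Algebra.TensorProduct.tmul_mul_tmul, mul_one, one_mul, TensorProduct.tmul_sub,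
          Algebra.algebraMap_eq_smul_one, TensorProduct.tmul_smul, TensorProduct.smul_tmul']
      rw [this]
      exact Ideal.mul_mem_left _ _ (Ideal.mem_map_of_mem i hc)
    | add x y hx hy =>
      obtain ⟨a, ha⟩ := hx
      obtain ⟨b, hb⟩ := hy
      refine ⟨a + b, ?_⟩
      rw [TensorProduct.add_tmul, add_sub_add_comm]
      exact Ideal.add_mem _ ha hb
  have hle : ∀ Q1 Q2 : PrimeSpectrum (L ⊗[k] Z),
      PrimeSpectrum.comap i Q1 = PrimeSpectrum.comap i Q2 → Q1 ≤ Q2 := by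
    intro Q1 Q2 h12 w hw
    have hmax : (PrimeSpectrum.comap i Q1).asIdeal.IsMaximal := inferInstance
    obtain ⟨l, hl⟩ := key _ hmax w
    have hm1 : (PrimeSpectrum.comap i Q1).asIdeal.map i ≤ Q1.asIdeal := Ideal.map_comap_le
    have hm2 : (PrimeSpectrum.comap i Q1).asIdeal.map i ≤ Q2.asIdeal := by
      rw [h12]; exact Ideal.map_comap_le
    have h1 : l ⊗ₜ[k] (1 : Z) ∈ Q1.asIdeal := by
      have := Q1.asIdeal.sub_mem hw (hm1 hl)
      simpa using this
    have h0 : l = 0 := by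
      by_contra h0
      apply Q1.isPrime.ne_top
      rw [Ideal.eq_top_iff_one]
      have := Q1.asIdeal.mul_mem_left (l⁻¹ ⊗ₜ[k] (1 : Z)) h1
      rwa [Algebra.TensorProduct.tmul_mul_tmul, inv_mul_cancel₀ h0, one_mul,
        ← Algebra.TensorProduct.one_def] at this
    rw [h0, TensorProduct.zero_tmul, sub_zero] at hl
    exact hm2 hl
  have hinj : Function.Injective (PrimeSpectrum.comap i) := fun Q1 Q2 h =>
    le_antisymm (hle Q1 Q2 h) (hle Q2 Q1 h.symm)
  let W : TopologicalSpace.Clopens (PrimeSpectrum Z) :=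
    ⟨PrimeSpectrum.comap i '' (PrimeSpectrum.basicOpen u : Set _), isClopen_discrete _⟩
  let f := PrimeSpectrum.isIdempotentElemEquivClopens.symm W
  have hf := PrimeSpectrum.basicOpen_isIdempotentElemEquivClopens_symm W
  refine ⟨f.1, f.2, ?_⟩
  refine PrimeSpectrum.basicOpen_injOn_isIdempotentElem hu (f.2.map i) ?_
  change PrimeSpectrum.basicOpen u = PrimeSpectrum.basicOpen (i f.1)
  rw [← PrimeSpectrum.comap_basicOpen]
  ext Q
  have : Q ∈ (TopologicalSpace.Opens.comap ⟨PrimeSpectrum.comap i, PrimeSpectrum.continuous_comap i⟩ (PrimeSpectrum.basicOpen f.1) : Set _) ↔ PrimeSpectrum.comap i Q ∈ W := by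
    rw [hf]; rfl
  refine Iff.trans ?_ this.symm
  change _ ↔ PrimeSpectrum.comap i Q ∈ PrimeSpectrum.comap i '' (PrimeSpectrum.basicOpen u : Set _)
  rw [hinj.mem_set_image]

theorem split_descend {k : Type u} {B : Type v} {L : Type*} [Field k] [Ring B] [Algebra k B]
    [Module.Finite k B] [Field L] [Algebra k L] (hs : IsSplitAlgebra k B)
    (u : L ⊗[k] B) (hu : IsIdempotentElem u) (hc : ∀ x, u * x = x * u) :
    ∃ f : B, IsIdempotentElem f ∧ (∀ x, f * x = x * f) ∧ u = (1 : L) ⊗ₜ[k] f := by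
  have h1 : u ∈ Subalgebra.centralizer k
      ((Algebra.TensorProduct.includeRight : B →ₐ[k] L ⊗[k] B).range : Set (L ⊗[k] B)) := by
    rw [Subalgebra.mem_centralizer_iff]
    intro g _; exact (hc g).symm
  rw [Subalgebra.centralizer_range_includeRight_eq_center_tensorProduct] at h1
  obtain ⟨u', rfl⟩ := h1
  have hinj : Function.Injective (Algebra.TensorProduct.map (AlgHom.id k L)
      (Subalgebra.center k B).val) := by
    have := Module.Flat.lTensor_preserves_injective_linearMap (M := L)
      (Subalgebra.center k B).val.toLinearMap Subtype.val_injective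
    exact this
  have hu' : IsIdempotentElem u' := hinj (by
    rw [map_mul]; exact hu)
  obtain ⟨f, hf, hfu⟩ := comm_descend (L := L) (fun m hm z => split_center hs m z) u' hu'
  refine ⟨f.1, congrArg Subtype.val hf, fun x => ((Subalgebra.mem_center_iff.mp f.2) x).symm, ?_⟩
  rw [hfu]; simp

noncomputable def cbc (R S L A : Type*) [CommRing R] [CommRing S] [Algebra R S] [CommRing L]
    [Algebra S L] [Algebra R L] [IsScalarTower R S L] [Ring A] [Algebra R A] :
    L ⊗[S] (S ⊗[R] A) ≃ₐ[L] L ⊗[R] A :=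
  AlgEquiv.ofLinearEquiv (AlgebraTensorModule.cancelBaseChange R S L L A)
    (by simp [Algebra.TensorProduct.one_def])
    (by
      intro x y
      induction x with
      | zero => simp
      | add a b ha hb => simp only [add_mul, map_add, ha, hb]
      | tmul l z =>
        induction y with
        | zero => simp
        | add a b ha hb => simp only [mul_add, map_add, ha, hb]
        | tmul l' z' =>
          induction z with
          | zero => simp
          | add a b ha hb => simp only [TensorProduct.tmul_add, add_mul, map_add, ha, hb]
          | tmul s a =>
            induction z' with
            | zero => simp
            | add a b ha hb => simp only [TensorProduct.tmul_add, mul_add, map_add, ha, hb]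
            | tmul s' a' =>
              simp only [Algebra.TensorProduct.tmul_mul_tmul,
                AlgebraTensorModule.cancelBaseChange_tmul, smul_mul_smul_comm, mul_smul])

theorem cbc_tmul (R S L A : Type*) [CommRing R] [CommRing S] [Algebra R S] [CommRing L]
    [Algebra S L] [Algebra R L] [IsScalarTower R S L] [Ring A] [Algebra R A] (l : L) (s : S) (a : A) :
    cbc R S L A (l ⊗ₜ (s ⊗ₜ a)) = (s • l) ⊗ₜ a := 
  AlgebraTensorModule.cancelBaseChange_tmul ..

section C
variable {R A : Type*} [CommRing R] [Ring A] [Algebra R A]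

noncomputable def bc {k L : Type*} [CommRing k] [CommRing L] [Algebra R k] [Algebra R L]
    (A : Type*) [Ring A] [Algebra R A] (φ : k →ₐ[R] L) : k ⊗[R] A →ₐ[R] L ⊗[R] A :=
  Algebra.TensorProduct.map φ (AlgHom.id R A)

theorem bc_tmul {k L : Type*} [CommRing k] [CommRing L] [Algebra R k] [Algebra R L]
    (φ : k →ₐ[R] L) (c : k) (a : A) : bc A φ (c ⊗ₜ a) = φ c ⊗ₜ a := rfl

theorem bc_smul {k L : Type*} [CommRing k] [CommRing L] [Algebra R k] [Algebra R L]
    (φ : k →ₐ[R] L) (c : k) (w : k ⊗[R] A) : bc A φ (c • w) = φ c • bc A φ w := by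
  induction w with
  | zero => simp
  | add x y hx hy => simp only [smul_add, map_add, hx, hy]
  | tmul d a => simp [bc_tmul, TensorProduct.smul_tmul']

theorem bc_bc {k L M : Type*} [CommRing k] [CommRing L] [CommRing M] [Algebra R k] [Algebra R L]
    [Algebra R M] (φ : k →ₐ[R] L) (ψ : L →ₐ[R] M) (w : k ⊗[R] A) :
    bc A ψ (bc A φ w) = bc A (ψ.comp φ) w := by
  induction w with
  | zero => simp
  | add x y hx hy => simp only [map_add, hx, hy]
  | tmul d a => simp [bc_tmul]

theorem central_of {L : Type*} [CommRing L] [Algebra R L] (z : L ⊗[R] A)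
    (h : ∀ a : A, z * (1 ⊗ₜ a) = (1 ⊗ₜ a) * z) (x : L ⊗[R] A) : z * x = x * z := by
  induction x with
  | zero => simp
  | add x y hx hy => rw [mul_add, add_mul, hx, hy]
  | tmul l a =>
    have : l ⊗ₜ[R] a = l • (1 ⊗ₜ[R] a) := by rw [TensorProduct.smul_tmul']; simp
    rw [this, mul_smul_comm, smul_mul_assoc, h]

theorem bc_central {k L : Type*} [CommRing k] [CommRing L] [Algebra R k] [Algebra R L]
    (φ : k →ₐ[R] L) (z : k ⊗[R] A) (hz : ∀ x, z * x = x * z) (x : L ⊗[R] A) :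
    bc A φ z * x = x * bc A φ z := by
  refine central_of _ (fun a => ?_) x
  have : (1 : L) ⊗ₜ[R] a = bc A φ (1 ⊗ₜ a) := by rw [bc_tmul, map_one]
  rw [this, ← map_mul, ← map_mul, hz]

theorem bc_injective [Module.Flat R A] {k L : Type*} [CommRing k] [CommRing L] [Algebra R k]
    [Algebra R L] (φ : k →ₐ[R] L) (hφ : Function.Injective φ) : Function.Injective (bc A φ) :=
  Module.Flat.rTensor_preserves_injective_linearMap (M := A) φ.toLinearMap hφ

theorem IsOC.bc [Module.Flat R A] {k L : Type*} [CommRing k] [CommRing L] [Algebra R k]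
    [Algebra R L] (φ : k →ₐ[R] L) (hφ : Function.Injective φ) {ι : Type*} {e : ι → k ⊗[R] A}
    (he : IsOC e) : IsOC (fun i => bc A φ (e i)) :=
  he.map (_root_.bc A φ).toRingHom (bc_injective φ hφ) (bc_central φ)

theorem bc_descend {R : Type u} {A : Type u} [CommRing R] [Ring A] [Algebra R A] [Module.Finite R A]
    {k L : Type u} [Field k] [Field L] [Algebra R k] [Algebra R L] (φ : k →ₐ[R] L)
    (hs : IsSplitAlgebra k (k ⊗[R] A)) (u : L ⊗[R] A) (hu : IsIdempotentElem u)
    (hc : ∀ x, u * x = x * u) :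
    ∃ f : k ⊗[R] A, IsIdempotentElem f ∧ (∀ x, f * x = x * f) ∧ bc A φ f = u := by
  letI : Algebra k L := φ.toRingHom.toAlgebra
  haveI : IsScalarTower R k L := IsScalarTower.of_algebraMap_eq (fun r => (φ.commutes r).symm)
  obtain ⟨f, hf, hfc, hfu⟩ := split_descend hs ((cbc R k L A).symm u) (hu.map _) (fun x => by
    apply (cbc R k L A).injective
    rw [map_mul, map_mul, AlgEquiv.apply_symm_apply, hc])
  refine ⟨f, hf, hfc, ?_⟩
  have h1 : ∀ w : k ⊗[R] A, cbc R k L A (1 ⊗ₜ w) = bc A φ w := by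
    intro w
    induction w with
    | zero => simp
    | add x y hx hy => simp only [TensorProduct.tmul_add, map_add, hx, hy]
    | tmul d a => rw [cbc_tmul, bc_tmul, Algebra.smul_def, mul_one]; rfl
  rw [← h1, ← hfu, AlgEquiv.apply_symm_apply]

/-- family descent -/
theorem IsOC.descend {R : Type u} {A : Type u} [CommRing R] [Ring A] [Algebra R A]
    [Module.Finite R A] [Module.Flat R A]
    {k L : Type u} [Field k] [Field L] [Algebra R k] [Algebra R L] (φ : k →ₐ[R] L)
    (hs : IsSplitAlgebra k (k ⊗[R] A)) {ι : Type*} {e : ι → L ⊗[R] A} (he : IsOC e) :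
    ∃ f : ι → k ⊗[R] A, IsOC f ∧ ∀ i, _root_.bc A φ (f i) = e i := by
  choose f hf hfc hfe using fun i => bc_descend φ hs (e i) (he.idem i) (he.cent i)
  refine ⟨f, ⟨hf, hfc, fun i h0 => he.ne i ?_, fun i j hij => ?_⟩, hfe⟩
  · rw [← hfe, h0, map_zero]
  · apply bc_injective φ φ.toRingHom.injective
    rw [map_mul, hfe, hfe, map_zero, he.orth i j hij]

theorem nak_idem [Module.Finite R A] (q : Ideal R) [q.IsPrime] (E E' : A)
    (hE : IsIdempotentElem E) (hE' : IsIdempotentElem E')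
    (h : ∀ x : A, (1 : q.ResidueField) ⊗ₜ[R] (E * x * E') = 0) :
    ∃ t, t ∉ q ∧ ∀ x : A, t • (E * x * E') = 0 := by
  let φ : A →ₗ[R] A := LinearMap.mulRight R E' ∘ₗ LinearMap.mulLeft R E
  have hφ : ∀ x, φ x = E * x * E' := fun x => rfl
  have hφφ : ∀ x, φ (φ x) = φ x := by
    intro x
    simp only [hφ]
    rw [← mul_assoc E, ← mul_assoc E, hE.eq, mul_assoc, hE'.eq]
  let M := LinearMap.range φ
  have h0 : LinearMap.lTensor q.ResidueField φ = 0 := by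
    apply TensorProduct.ext'
    intro c x
    rw [LinearMap.lTensor_tmul, hφ]
    have : c ⊗ₜ[R] (E * x * E') = c • ((1 : q.ResidueField) ⊗ₜ[R] (E * x * E')) := by
      rw [TensorProduct.smul_tmul']; simp
    rw [this, h]; simp
  have hcomp : φ.rangeRestrict ∘ₗ M.subtype = LinearMap.id := by
    ext ⟨y, x, rfl⟩
    exact hφφ x
  have hsub : Subsingleton (q.ResidueField ⊗[R] M) := by
    refine subsingleton_of_forall_eq 0 fun w => ?_
    obtain ⟨y, rfl⟩ := LinearMap.lTensor_surjective q.ResidueField φ.surjective_rangeRestrict w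
    have : φ.rangeRestrict = φ.rangeRestrict ∘ₗ φ := by
      apply LinearMap.ext
      intro x; apply Subtype.ext; exact (hφφ x).symm
    rw [this, LinearMap.lTensor_comp, h0]; simp
  have hns : (⟨q, inferInstance⟩ : PrimeSpectrum R) ∉ Module.support R M := by
    rw [Module.mem_support_iff_nontrivial_residueField_tensorProduct]
    exact not_nontrivial_iff_subsingleton.mpr hsub
  rw [Module.support_eq_zeroLocus, PrimeSpectrum.mem_zeroLocus, Set.not_subset] at hns
  obtain ⟨t, ht, htq⟩ := hns
  refine ⟨t, htq, fun x => ?_⟩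
  have := Module.mem_annihilator.mp ht ⟨φ x, x, rfl⟩
  exact congrArg Subtype.val this

noncomputable def coord (S : Type*) [CommRing S] [Algebra R S] (l : A →ₗ[R] R) : S ⊗[R] A →ₗ[R] S :=
  (TensorProduct.rid R S).toLinearMap ∘ₗ LinearMap.lTensor S l

theorem coord_tmul (S : Type*) [CommRing S] [Algebra R S] (l : A →ₗ[R] R) (s : S) (a : A) :
    coord S l (s ⊗ₜ a) = l a • s := by simp [coord]

theorem coord_bc {k L : Type*} [CommRing k] [CommRing L] [Algebra R k] [Algebra R L]
    (φ : k →ₐ[R] L) (l : A →ₗ[R] R) (w : k ⊗[R] A) : coord L l (bc A φ w) = φ (coord k l w) := by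
  induction w with
  | zero => simp
  | add x y hx hy => simp only [map_add, hx, hy]
  | tmul d a => rw [bc_tmul, coord_tmul, coord_tmul, map_smul]

theorem exists_dual (R A : Type*) [CommRing R] [Ring A] [Algebra R A] [Module.Finite R A]
    [Module.Projective R A] : ∃ (m : ℕ) (a : Fin m → A) (l : Fin m → A →ₗ[R] R),
    ∀ x, x = ∑ j, l j x • a j := by
  obtain ⟨m, f, g, -, -, h⟩ := Module.Finite.exists_comp_eq_id_of_projective R A
  refine ⟨m, fun j => f (Pi.single j 1), fun j => LinearMap.proj j ∘ₗ g, fun x => ?_⟩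
  have h1 : f (g x) = x := LinearMap.congr_fun h x
  conv_lhs => rw [← h1, ← Finset.univ_sum_single (g x), map_sum]
  refine Finset.sum_congr rfl fun j _ => ?_
  rw [← map_smul]; congr 1
  ext i
  by_cases hij : i = j
  · subst hij; simp
  · simp [hij]

theorem coord_sum {m : ℕ} {a : Fin m → A} {l : Fin m → A →ₗ[R] R}
    (h : ∀ x, x = ∑ j, l j x • a j) (S : Type*) [CommRing S] [Algebra R S] (w : S ⊗[R] A) :
    w = ∑ j, coord S (l j) w ⊗ₜ a j := by
  induction w with
  | zero => simp
  | add x y hx hy =>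
    simp only [map_add, TensorProduct.add_tmul, Finset.sum_add_distrib]
    rw [← hx, ← hy]
  | tmul s b =>
    conv_lhs => rw [h b]
    rw [TensorProduct.tmul_sum]
    refine Finset.sum_congr rfl fun j _ => ?_
    rw [coord_tmul, TensorProduct.tmul_smul, TensorProduct.smul_tmul']

theorem aeval_smul_idem {k B : Type*} [Field k] [Ring B] [Algebra k B] (e : B)
    (he : IsIdempotentElem e) (s : k) (G : Polynomial k) (h0 : G.eval 0 = 0) (h1 : G.eval s = 1) :
    Polynomial.aeval (s • e) G = e := by
  have key : ∀ G : Polynomial k,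
      Polynomial.aeval (s • e) G = G.eval 0 • (1 - e) + G.eval s • e := by
    intro G
    induction G using Polynomial.induction_on' with
    | add p q hp hq => rw [map_add, hp, hq, Polynomial.eval_add, Polynomial.eval_add]; module
    | monomial n a =>
      rw [Polynomial.aeval_monomial, Polynomial.eval_monomial, Polynomial.eval_monomial, smul_pow]
      rcases n with _ | n
      · simp [Algebra.algebraMap_eq_smul_one, smul_sub]
      · rw [he.pow_succ_eq]; simp [Algebra.algebraMap_eq_smul_one, smul_smul, mul_comm]
  rw [key, h0, h1]; simp

theorem clear_denom (p : Ideal R) [p.IsPrime] (w : p.ResidueField ⊗[R] A) :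
    ∃ s, s ∉ p ∧ ∃ a : A, s • w = 1 ⊗ₜ a := by
  induction w with
  | zero => exact ⟨1, p.one_notMem, 0, by simp⟩
  | add x y hx hy =>
    obtain ⟨s, hs, a, ha⟩ := hx
    obtain ⟨t, ht, b, hb⟩ := hy
    refine ⟨s * t, fun h => (Ideal.IsPrime.mem_or_mem ‹_› h).elim hs ht, t • a + s • b, ?_⟩
    rw [smul_add, mul_comm s t, mul_smul, ha, mul_comm t s, mul_smul, hb, TensorProduct.tmul_add,
      TensorProduct.tmul_smul, TensorProduct.tmul_smul]
  | tmul c b =>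
    obtain ⟨x, y, hy, hxy⟩ := IsFractionRing.div_surjective (R ⧸ p) c
    obtain ⟨x, rfl⟩ := Ideal.Quotient.mk_surjective x
    obtain ⟨y, rfl⟩ := Ideal.Quotient.mk_surjective y
    have hy' : y ∉ p := fun h => nonZeroDivisors.ne_zero hy (Ideal.Quotient.eq_zero_iff_mem.mpr h)
    refine ⟨y, hy', x • b, ?_⟩
    rw [TensorProduct.tmul_smul, TensorProduct.smul_tmul', TensorProduct.smul_tmul']
    congr 1
    rw [← hxy, Ideal.algebraMap_quotient_residueField_mk, Ideal.algebraMap_quotient_residueField_mk,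
      Algebra.smul_def, Algebra.smul_def, mul_one, mul_div_cancel₀]
    rwa [Ne, Ideal.algebraMap_residueField_eq_zero]
end C

section D

theorem cbc_one (R T L A : Type*) [CommRing R] [CommRing T] [Algebra R T] [CommRing L]
    [Algebra T L] [Algebra R L] [IsScalarTower R T L] [Ring A] [Algebra R A] (w : T ⊗[R] A) :
    cbc R T L A (1 ⊗ₜ w) = bc A (IsScalarTower.toAlgHom R T L) w := by
  induction w with
  | zero => simp
  | add x y hx hy => simp only [TensorProduct.tmul_add, map_add, hx, hy]
  | tmul d a => rw [cbc_tmul, bc_tmul, Algebra.smul_def, mul_one]; rfl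

theorem spread_zero {R A T : Type*} [CommRing R] [Ring A] [Algebra R A] [CommRing T] [Algebra R T]
    [Module.Finite R A] (q : Ideal T) [q.IsPrime] (E E' : T ⊗[R] A)
    (hE : IsIdempotentElem E) (hE' : IsIdempotentElem E')
    (h : ∀ x, bc A (IsScalarTower.toAlgHom R T q.ResidueField) (E * x * E') = 0) :
    ∃ t, t ∉ q ∧ ∀ x, t • (E * x * E') = 0 := by
  refine nak_idem q E E' hE hE' fun x => ?_
  apply (cbc R T q.ResidueField A).injective
  rw [cbc_one, h, map_zero]

theorem spread_oc {R A T : Type*} [CommRing R] [Ring A] [Algebra R A] [CommRing T] [Algebra R T]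
    [Module.Finite R A] [Module.Projective R A] (q : Ideal T) [q.IsPrime] {n : ℕ}
    (E : Fin n → T ⊗[R] A) (hE : ∀ i, IsIdempotentElem (E i))
    (h : IsOC (fun i => bc A (IsScalarTower.toAlgHom R T q.ResidueField) (E i))) :
    ∃ t, t ∉ q ∧ ∀ (L : Type u) [Field L] [Algebra R L] (φ : T →ₐ[R] L), φ t ≠ 0 →
      IsOC (fun i => bc A φ (E i)) := by
  have hq : q.IsPrime := inferInstance
  obtain ⟨m, a, l, hl⟩ := exists_dual R A
  have h1 : ∀ i, ∃ t, t ∉ q ∧ ∀ x, t • (E i * x * (1 - E i)) = 0 := fun i =>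
    spread_zero q _ _ (hE i) (hE i).one_sub (fun x => by
      have := h.cent i
      have h2 := h.idem i
      rw [map_mul, map_mul, map_sub, map_one, this, mul_assoc, mul_sub, mul_one, h2.eq, sub_self,
        mul_zero])
  have h2 : ∀ i, ∃ t, t ∉ q ∧ ∀ x, t • ((1 - E i) * x * E i) = 0 := fun i =>
    spread_zero q _ _ (hE i).one_sub (hE i) (fun x => by
      have := h.cent i
      have h2 := h.idem i
      rw [map_mul, map_mul, map_sub, map_one, mul_assoc, ← this, ← mul_assoc, sub_mul, one_mul,
        h2.eq, sub_self, zero_mul])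
  have h3 : ∀ i j, ∃ t, t ∉ q ∧ (i ≠ j → ∀ x, t • (E i * x * E j) = 0) := fun i j => by
    by_cases hij : i = j
    · exact ⟨1, q.one_notMem, fun h => absurd hij h⟩
    · obtain ⟨t, ht, h⟩ := spread_zero q _ _ (hE i) (hE j) (fun x => by
        have h1 := h.cent i
        have h2 := h.orth i j hij
        rw [map_mul, map_mul, h1, mul_assoc, h2, mul_zero])
      exact ⟨t, ht, fun _ => h⟩
  have h4 : ∀ i, ∃ j, coord T (l j) (E i) ∉ q := by
    intro i
    by_contra! hcon
    apply h.ne i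
    rw [coord_sum hl _ (bc A _ (E i))]
    refine Finset.sum_eq_zero fun j _ => ?_
    rw [coord_bc]
    have : (IsScalarTower.toAlgHom R T q.ResidueField) (coord T (l j) (E i)) = 0 := by
      rw [IsScalarTower.toAlgHom_apply, Ideal.algebraMap_residueField_eq_zero]
      exact hcon j
    rw [this, TensorProduct.zero_tmul]
  choose t1 ht1 h1 using h1
  choose t2 ht2 h2 using h2
  choose t3 ht3 h3 using h3
  choose j hj using h4
  refine ⟨∏ i, (t1 i * t2 i * coord T (l (j i)) (E i) * ∏ k, t3 i k), ?_, ?_⟩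
  · rw [Ideal.IsPrime.prod_mem_iff]
    rintro ⟨i, -, hi⟩
    rw [hq.mul_mem_iff_mem_or_mem, hq.mul_mem_iff_mem_or_mem,
      hq.mul_mem_iff_mem_or_mem, Ideal.IsPrime.prod_mem_iff] at hi
    rcases hi with ((h | h) | h) | ⟨k, -, h⟩
    exacts [ht1 i h, ht2 i h, hj i h, ht3 i k h]
  · intro L _ _ φ hφ
    rw [map_prod, Finset.prod_ne_zero_iff] at hφ
    have hφ' : ∀ i, φ (t1 i) ≠ 0 ∧ φ (t2 i) ≠ 0 ∧ φ (coord T (l (j i)) (E i)) ≠ 0 ∧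
        ∀ k, φ (t3 i k) ≠ 0 := by
      intro i
      have := hφ i (Finset.mem_univ i)
      rw [map_mul, map_mul, map_mul, map_prod, mul_ne_zero_iff, mul_ne_zero_iff, mul_ne_zero_iff,
        Finset.prod_ne_zero_iff] at this
      exact ⟨this.1.1.1, this.1.1.2, this.1.2, fun k => this.2 k (Finset.mem_univ k)⟩
    have kill : ∀ (t : T) (y : T ⊗[R] A), φ t ≠ 0 → t • y = 0 → bc A φ y = 0 := by
      intro t y ht hy
      have : φ t • bc A φ y = 0 := by rw [← bc_smul, hy, map_zero]
      exact (smul_eq_zero.mp this).resolve_left ht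
    refine ⟨fun i => (hE i).map _, fun i => central_of _ fun b => ?_, fun i h0 => ?_,
      fun i k hik => ?_⟩
    · have hb : (1 : L) ⊗ₜ[R] b = bc A φ (1 ⊗ₜ b) := by rw [bc_tmul, map_one]
      have k1 := kill _ _ (hφ' i).1 (h1 i (1 ⊗ₜ b))
      have k2 := kill _ _ (hφ' i).2.1 (h2 i (1 ⊗ₜ b))
      rw [map_mul, map_mul, map_sub, map_one, ← hb, mul_sub, mul_one, sub_eq_zero] at k1
      rw [map_mul, map_mul, map_sub, map_one, ← hb, sub_mul, one_mul, sub_mul, sub_eq_zero] at k2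
      rw [k1, k2]
    · apply (hφ' i).2.2.1
      rw [← coord_bc]
      rw [h0, map_zero]
    · have k1 := kill _ _ ((hφ' i).2.2.2 k) (h3 i k hik 1)
      rwa [mul_one, map_mul] at k1
end D

section PolyE
open TensorProduct Polynomial

theorem isCoprime_part {k : Type*} [Field k] (f : k[X]) (hf : f.Monic) (s : k) (hs : s ≠ 0)
    (h0 : f.eval 0 = 0) (h1 : f.eval s = 0) :
    ∃ g h : k[X], f = g * h ∧ g.Monic ∧ h.Monic ∧ IsCoprime g h ∧ g.eval s = 0 ∧ h.eval 0 = 0 := by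
  obtain ⟨h, hfh, hnd⟩ := Polynomial.exists_eq_pow_rootMultiplicity_mul_and_not_dvd f hf.ne_zero s
  have hpos : 0 < f.rootMultiplicity s := (Polynomial.rootMultiplicity_pos hf.ne_zero).mpr h1
  have hg : ((X - C s) ^ f.rootMultiplicity s).Monic := (monic_X_sub_C s).pow _
  refine ⟨(X - C s) ^ f.rootMultiplicity s, h, hfh, hg, hg.of_mul_monic_left (hfh ▸ hf), ?_, ?_, ?_⟩
  · exact IsCoprime.pow_left ((irreducible_X_sub_C s).coprime_iff_not_dvd.mpr hnd)
  · simp [hpos.ne']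
  · rw [hfh] at h0
    simpa [hs] using h0

/-- Idempotents lift along etale neighbourhoods. -/
theorem lift_idem {R A : Type u} [CommRing R] [Ring A] [Algebra R A]
    [Module.Finite R A] [Module.Projective R A] (p : Ideal R) [p.IsPrime] {n : ℕ}
    (e : Fin n → p.ResidueField ⊗[R] A) (he : IsOC e) :
    ∃ (T : Type u) (_ : CommRing T) (_ : Algebra R T) (_ : Algebra.Etale R T)
      (q : Ideal T) (_ : q.IsPrime) (_ : q.LiesOver p) (t : T) (_ : t ∉ q)
      (E : Fin n → T ⊗[R] A), ∀ (L : Type u) [Field L] [Algebra R L] (φ : T →ₐ[R] L), φ t ≠ 0 →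
      IsOC (fun i => bc A φ (E i)) := by
  have hp : p.IsPrime := inferInstance
  choose s0 hs0 a0 ha0 using fun i => clear_denom p (e i)
  obtain ⟨s, hs, a, ha⟩ : ∃ s, s ∉ p ∧ ∃ a : Fin n → A, ∀ i, s • e i = 1 ⊗ₜ a i := by
    refine ⟨∏ i, s0 i, ?_, fun i => (∏ j ∈ Finset.univ.erase i, s0 j) • a0 i, fun i => ?_⟩
    · rw [Ideal.IsPrime.prod_mem_iff]
      rintro ⟨i, -, hi⟩
      exact hs0 i hi
    · rw [TensorProduct.tmul_smul, ← ha0, smul_smul, mul_comm,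
        Finset.mul_prod_erase _ _ (Finset.mem_univ i)]
  have hint : ∀ i, IsIntegral R (a i) := fun i => Algebra.IsIntegral.isIntegral _
  choose f hf hfa using hint
  let F : R[X] := X * (X - C s) * ∏ i, f i
  have hF : F.Monic := (monic_X.mul (monic_X_sub_C s)).mul (monic_prod_of_monic _ _ fun i _ => hf i)
  have hFa : ∀ i, aeval (a i) F = 0 := by
    intro i
    have : aeval (a i) (f i) = 0 := hfa i
    simp only [F]
    rw [← Finset.prod_erase_mul _ _ (Finset.mem_univ i), map_mul, map_mul (aeval (a i)) _ (f i),
      this, mul_zero, mul_zero]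
  set sb : p.ResidueField := algebraMap R _ s with hsb
  have hsb0 : sb ≠ 0 := by rwa [hsb, Ne, Ideal.algebraMap_residueField_eq_zero]
  obtain ⟨g, h, hgh, hg, hh, hco, hgs, hh0⟩ := isCoprime_part (F.map (algebraMap R p.ResidueField))
    (hF.map _) sb hsb0 (by simp [F]) (by simp [F, hsb])
  obtain ⟨T, _, _, _, q, _, _, g', h', -, -, -, hfac, ⟨u, v, huv⟩, hg', hh'⟩ :=
    Algebra.exists_etale_bijective_residueFieldMap_and_map_eq_mul_and_isCoprime p F g h hF hg hh
      hgh hco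
  set ψ := Ideal.ResidueField.mapₐ p q (Algebra.ofId R T) (Ideal.over_def q p) with hψ
  let G : T[X] := v * h'
  let E : Fin n → T ⊗[R] A := fun i => aeval (1 ⊗ₜ[R] a i : T ⊗[R] A) G
  have hzero : ∀ i, aeval (1 ⊗ₜ[R] a i : T ⊗[R] A) (g' * h') = 0 := by
    intro i
    rw [← hfac, aeval_map_algebraMap]
    have := (aeval_algHom_apply (Algebra.TensorProduct.includeRight : A →ₐ[R] T ⊗[R] A) (a i) F)
    rw [hFa, map_zero] at this
    exact this
  have hid : ∀ i, IsIdempotentElem (E i) := by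
    intro i
    have : G * G = G - v * u * (g' * h') := by
      simp only [G]
      linear_combination (v * h') * huv
    show E i * E i = E i
    simp only [E]
    rw [← map_mul, this, map_sub, map_mul _ (v * u), hzero, mul_zero, sub_zero]
  have him : ∀ i, bc A (IsScalarTower.toAlgHom R T q.ResidueField) (E i) = bc A ψ (e i) := by
    intro i
    have e1 : bc A (IsScalarTower.toAlgHom R T q.ResidueField) (E i) =
        aeval (1 ⊗ₜ[R] a i : q.ResidueField ⊗[R] A) (G.map (algebraMap T q.ResidueField)) := by
      have key : ∀ G : T[X], bc A (IsScalarTower.toAlgHom R T q.ResidueField)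
          (aeval (1 ⊗ₜ[R] a i : T ⊗[R] A) G) =
        aeval (1 ⊗ₜ[R] a i : q.ResidueField ⊗[R] A) (G.map (algebraMap T q.ResidueField)) := by
        intro G
        induction G using Polynomial.induction_on' with
        | add p q hp hq => simp only [map_add, Polynomial.map_add, hp, hq]
        | monomial m c =>
          rw [aeval_monomial, map_monomial, aeval_monomial, map_mul, map_pow, bc_tmul, map_one]
          congr 1
      exact key G
    have e2 : (1 ⊗ₜ[R] a i : q.ResidueField ⊗[R] A) = (ψ sb) • bc A ψ (e i) := by
      rw [← bc_smul, hsb, algebraMap_smul, ha, bc_tmul, map_one]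
    rw [e1, e2]
    have hG : G.map (algebraMap T q.ResidueField) =
      v.map (algebraMap T q.ResidueField) * h.map ψ.toRingHom := by
      simp only [G]; rw [Polynomial.map_mul, hh']
    have huv' : u.map (algebraMap T q.ResidueField) * g.map ψ.toRingHom +
      v.map (algebraMap T q.ResidueField) * h.map ψ.toRingHom = 1 := by
      rw [hg', hh', ← Polynomial.map_mul, ← Polynomial.map_mul, ← Polynomial.map_add, huv,
        Polynomial.map_one]
    have evg : (g.map ψ.toRingHom).eval (ψ sb) = 0 := by
      have := Polynomial.eval_map_apply (p := g) ψ.toRingHom sb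
      rw [hgs, map_zero] at this
      exact this
    have evh : (h.map ψ.toRingHom).eval 0 = 0 := by
      have := Polynomial.eval_map_apply (p := h) ψ.toRingHom 0
      rw [hh0, map_zero] at this
      exact this
    apply aeval_smul_idem
    · exact (he.idem i).map _
    · rw [hG, eval_mul, evh, mul_zero]
    · have := congrArg (eval (ψ sb)) huv'
      rw [eval_add, eval_mul, evg, mul_zero, zero_add, eval_one] at this
      rw [hG, this]
  have hOC : IsOC (fun i => bc A (IsScalarTower.toAlgHom R T q.ResidueField) (E i)) := by
    simp_rw [him]
    exact he.bc ψ ψ.toRingHom.injective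
  obtain ⟨t, ht, hL⟩ := spread_oc q E hid hOC
  exact ⟨T, _, _, ‹_›, q, ‹_›, ‹_›, t, ht, E, hL⟩

end PolyE

theorem nb_le {R A : Type u} [CommRing R] [Ring A] [Algebra R A] [Module.Finite R A]
    [Module.Flat R A] {k L : Type u} [Field k] [Field L] [Algebra R k] [Algebra R L]
    (φ : k →ₐ[R] L) : numBlocks (k ⊗[R] A) ≤ numBlocks (L ⊗[R] A) := by
  obtain ⟨e, he⟩ := exists_isOC k (k ⊗[R] A)
  simpa using (he.bc φ φ.toRingHom.injective).card_le L

theorem nb_le_of_oc {R A : Type u} [CommRing R] [Ring A] [Algebra R A] [Module.Finite R A]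
    [Module.Flat R A] {k L : Type u} [Field k] [Field L] [Algebra R k] [Algebra R L]
    (φ : k →ₐ[R] L) (hs : IsSplitAlgebra k (k ⊗[R] A)) {n : ℕ} {e : Fin n → L ⊗[R] A}
    (he : IsOC e) : n ≤ numBlocks (k ⊗[R] A) := by
  obtain ⟨f, hf, -⟩ := he.descend φ hs
  simpa using hf.card_le k

section F
variable {R A : Type u} [CommRing R] [Ring A] [Algebra R A] [Module.Finite R A]
    [Module.Projective R A]

theorem nhds_ge (hs : ∀ p : PrimeSpectrum R,
      IsSplitAlgebra (resFieldAt R p) (resFieldAt R p ⊗[R] A)) (p : PrimeSpectrum R) :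
    ∃ U : Set (PrimeSpectrum R), IsOpen U ∧ p ∈ U ∧ ∀ p' ∈ U,
      numBlocks (resFieldAt R p ⊗[R] A) ≤ numBlocks (resFieldAt R p' ⊗[R] A) := by
  obtain ⟨e, he⟩ := exists_isOC (resFieldAt R p) (resFieldAt R p ⊗[R] A)
  obtain ⟨T, _, _, _, q, _, hq, t, ht, E, hL⟩ := lift_idem p.asIdeal e he
  refine ⟨PrimeSpectrum.comap (algebraMap R T) '' (PrimeSpectrum.basicOpen t),
    PrimeSpectrum.isOpenMap_comap_of_hasGoingDown_of_finitePresentation _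
      (PrimeSpectrum.basicOpen t).isOpen, ⟨⟨q, ‹_›⟩, ht, ?_⟩, ?_⟩
  · ext1; exact (Ideal.over_def q p.asIdeal).symm
  · rintro _ ⟨q', hq', rfl⟩
    refine nb_le_of_oc (L := q'.asIdeal.ResidueField) (Ideal.ResidueField.mapₐ
      (PrimeSpectrum.comap (algebraMap R T) q').asIdeal q'.asIdeal (Algebra.ofId R T) rfl) (hs _)
      (hL q'.asIdeal.ResidueField (IsScalarTower.toAlgHom R T _) ?_)
    rw [IsScalarTower.toAlgHom_apply, Ne, Ideal.algebraMap_residueField_eq_zero]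
    exact hq'

theorem lsc (hs : ∀ p : PrimeSpectrum R,
      IsSplitAlgebra (resFieldAt R p) (resFieldAt R p ⊗[R] A)) :
    LowerSemicontinuous (fun p : PrimeSpectrum R => numBlocks (resFieldAt R p ⊗[R] A)) := by
  intro p y hy
  obtain ⟨U, hU, hp, h⟩ := nhds_ge hs p
  filter_upwards [hU.mem_nhds hp] with p' hp'
  exact lt_of_lt_of_le hy (h p' hp')

theorem loc_closed (hs : ∀ p : PrimeSpectrum R,
      IsSplitAlgebra (resFieldAt R p) (resFieldAt R p ⊗[R] A)) (n : ℕ) : IsLocallyClosed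
      {p : PrimeSpectrum R | numBlocks (resFieldAt R p ⊗[R] A) = n} := by
  rcases n with _ | n
  · have := (lsc hs).isClosed_preimage 0
    convert this.isLocallyClosed using 1
    ext; simp
  · have h1 := (lsc hs).isClosed_preimage (n + 1)
    have h2 := (lsc hs).isOpen_preimage n
    convert h2.isLocallyClosed.inter h1.isLocallyClosed using 1
    ext; simp; omega

theorem nb_bot [IsDomain R] (hs : ∀ p : PrimeSpectrum R,
      IsSplitAlgebra (resFieldAt R p) (resFieldAt R p ⊗[R] A)) :
    numBlocks (resFieldAt R ⊥ ⊗[R] A) = numBlocks (FractionRing R ⊗[R] A) := by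
  haveI : IsFractionRing R (resFieldAt R ⊥) :=
    inferInstanceAs (IsFractionRing R (⊥ : Ideal R).ResidueField)
  exact le_antisymm (nb_le (FractionRing.algEquiv R (resFieldAt R ⊥)).symm.toAlgHom)
    (nb_le (FractionRing.algEquiv R (resFieldAt R ⊥)).toAlgHom)

theorem le_bot [IsDomain R] (hs : ∀ p : PrimeSpectrum R,
      IsSplitAlgebra (resFieldAt R p) (resFieldAt R p ⊗[R] A)) (p : PrimeSpectrum R) :
    numBlocks (resFieldAt R p ⊗[R] A) ≤ numBlocks (FractionRing R ⊗[R] A) := by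
  obtain ⟨U, hU, hp, h⟩ := nhds_ge hs p
  rw [← nb_bot hs]
  refine h ⊥ ?_
  exact ((PrimeSpectrum.le_iff_specializes ⊥ p).mp bot_le).mem_open hU hp

end F

theorem val_lemma {D K B : Type u} [CommRing D] [IsDomain D] [ValuationRing D] [Field K]
    [Algebra D K] [IsFractionRing D K] [Ring B] [Algebra D B] [Module.Finite D B]
    [Module.Projective D B]
    (hdesc : ∀ (L : Type u) [Field L] [Algebra D L] (φ : K →ₐ[D] L) (u : L ⊗[D] B),
      IsIdempotentElem u → (∀ x, u * x = x * u) →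
      ∃ f : K ⊗[D] B, IsIdempotentElem f ∧ (∀ x, f * x = x * f) ∧ bc B φ f = u)
    (e : Fin (numBlocks (K ⊗[D] B)) → (IsLocalRing.maximalIdeal D).ResidueField ⊗[D] B)
    (he : IsOC e) (u : K ⊗[D] B) (hu : IsIdempotentElem u) (huc : ∀ x, u * x = x * u) :
    ∃ b : B, 1 ⊗ₜ b = u := by
  obtain ⟨T, _, _, _, q, hqp, hq, t, ht, E, hL⟩ := lift_idem (IsLocalRing.maximalIdeal D) e he
  obtain ⟨q0, hq0q, hq0, hq0b⟩ := Ideal.exists_ideal_le_liesOver_of_le (p := (⊥ : Ideal D))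
    (q := IsLocalRing.maximalIdeal D) q bot_le
  let L := q0.ResidueField
  let φ0 : T →ₐ[D] L := IsScalarTower.toAlgHom D T L
  have hφ0 : ∀ x, φ0 x = 0 ↔ x ∈ q0 := fun x => by
    simp only [φ0, L]
    rw [IsScalarTower.toAlgHom_apply, Ideal.algebraMap_residueField_eq_zero]
  have hinj : Function.Injective (Algebra.ofId D L) := by
    rw [injective_iff_map_eq_zero]
    intro d hd
    have : φ0 (algebraMap D T d) = 0 := by rw [AlgHom.commutes]; exact hd
    rw [hφ0] at this
    have h2 : d ∈ (⊥ : Ideal D) := by rw [Ideal.over_def q0 (⊥ : Ideal D)]; exact this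
    simpa using h2
  let φ : K →ₐ[D] L := IsFractionRing.liftAlgHom (g := Algebra.ofId D L) hinj
  have hOC := hL L φ0 (fun h => ht (hq0q ((hφ0 t).mp h)))
  choose f hf hfc hfe using fun i => hdesc L φ (bc B φ0 (E i)) (hOC.idem i) (hOC.cent i)
  have hfOC : IsOC f := by
    refine ⟨hf, hfc, fun i h0 => hOC.ne i ?_, fun i j hij => ?_⟩
    · rw [← hfe, h0, map_zero]
    · apply bc_injective φ φ.toRingHom.injective
      rw [map_mul, hfe, hfe, map_zero]
      exact hOC.orth i j hij
  obtain ⟨m, a, l, hl⟩ := exists_dual D B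
  have hint : ∀ i j, ∃ d : D, algebraMap D K d = coord K (l j) (f i) := by
    intro i j
    set x := coord K (l j) (f i) with hx
    have hxτ : φ x = φ0 (coord T (l j) (E i)) := by rw [hx, ← coord_bc, hfe, coord_bc]
    rcases ValuationRing.isInteger_or_isInteger D x with ⟨d, hd⟩ | ⟨d, hd⟩
    · exact ⟨d, hd⟩
    · by_cases hx0 : x = 0
      · exact ⟨0, by rw [map_zero, hx0]⟩
      by_cases hdu : IsUnit d
      · obtain ⟨d, rfl⟩ := hdu
        refine ⟨(d⁻¹ : Dˣ), ?_⟩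
        have h1 : algebraMap D K (d⁻¹ : Dˣ) * algebraMap D K d = 1 := by
          rw [← map_mul, Units.inv_mul, map_one]
        rw [hd] at h1
        exact (eq_of_mul_inv_eq_one h1)
      · exfalso
        have hdm : d ∈ IsLocalRing.maximalIdeal D := hdu
        have h1 : φ (algebraMap D K d) * φ x = 1 := by
          rw [hd, ← map_mul, inv_mul_cancel₀ hx0, map_one]
        rw [hxτ, AlgHom.commutes, ← AlgHom.commutes φ0, ← map_mul] at h1
        have h2 : φ0 (algebraMap D T d * coord T (l j) (E i) - 1) = 0 := by
          rw [map_sub, h1, map_one, sub_self]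
        have h3 := hq0q ((hφ0 _).mp h2)
        have h4 : algebraMap D T d ∈ q := by
          have := hdm
          rw [Ideal.over_def q (IsLocalRing.maximalIdeal D)] at this
          exact this
        apply hqp.ne_top
        rw [Ideal.eq_top_iff_one]
        have := q.sub_mem (q.mul_mem_right (coord T (l j) (E i)) h4) h3
        simpa using this
  choose d hd using hint
  let H : AddSubgroup (K ⊗[D] B) :=
    (Algebra.TensorProduct.includeRight : B →ₐ[D] K ⊗[D] B).toRingHom.toAddMonoidHom.range
  have := hfOC.mem_of_card K H (fun i => ?_) u hu huc
  · obtain ⟨b, hb⟩ := this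
    exact ⟨b, hb⟩
  · refine ⟨∑ j, d i j • a j, ?_⟩
    change (1 : K) ⊗ₜ[D] (∑ j, d i j • a j) = _
    rw [coord_sum hl K (f i), TensorProduct.tmul_sum]
    refine Finset.sum_congr rfl fun j _ => ?_
    rw [← hd, TensorProduct.tmul_smul, TensorProduct.smul_tmul', Algebra.smul_def, mul_one]

theorem local_principal {D K : Type*} [CommRing D] [IsDomain D] [IsLocalRing D] [IsNoetherianRing D]
    [IsIntegrallyClosed D] [Field K] [Algebra D K] [IsFractionRing D K] (y : K)
    (hy : ¬ ∃ d, algebraMap D K d = y)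
    (hm : ∀ c ∈ IsLocalRing.maximalIdeal D, ∃ d, algebraMap D K d = algebraMap D K c * y) :
    (IsLocalRing.maximalIdeal D).IsPrincipal := by
  have hinj : Function.Injective (algebraMap D K) := IsFractionRing.injective D K
  by_cases hbot : IsLocalRing.maximalIdeal D = ⊥
  · rw [hbot]; exact bot_isPrincipal
  by_cases hA : ∃ c ∈ IsLocalRing.maximalIdeal D, ∃ v : Dˣ,
      algebraMap D K v = algebraMap D K c * y
  · obtain ⟨c, hc, v, hv⟩ := hA
    refine ⟨c, le_antisymm (fun b hb => ?_) ?_⟩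
    · obtain ⟨w, hw⟩ := hm b hb
      rw [Submodule.mem_span_singleton]
      refine ⟨w * (v⁻¹ : Dˣ), ?_⟩
      have hvv : algebraMap D K v * algebraMap D K (v⁻¹ : Dˣ) = 1 := by
        rw [← map_mul, Units.mul_inv, map_one]
      apply hinj
      rw [smul_eq_mul, map_mul, map_mul, hw]
      linear_combination (algebraMap D K b) * hvv -
        (algebraMap D K b * algebraMap D K (v⁻¹ : Dˣ)) * hv
    · rw [Submodule.span_le, Set.singleton_subset_iff]; exact hc
  · exfalso
    apply hy
    rw [← IsIntegrallyClosed.isIntegral_iff]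
    let N : Submodule D K := Submodule.map (Algebra.linearMap D K) (IsLocalRing.maximalIdeal D)
    refine isIntegral_of_smul_mem_submodule N ?_ ?_ y ?_
    · intro h0
      apply hbot
      rw [eq_bot_iff]
      intro x hx
      have : algebraMap D K x ∈ N := ⟨x, hx, rfl⟩
      rw [h0, Submodule.mem_bot] at this
      exact hinj (by rw [this, map_zero])
    · exact Submodule.FG.map _ (IsNoetherian.noetherian _)
    · rintro _ ⟨c, hc, rfl⟩
      obtain ⟨d, hd⟩ := hm c hc
      refine ⟨d, ?_, ?_⟩
      · intro hdu
        exact hA ⟨c, hc, hdu.unit, hd⟩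
      · rw [Algebra.linearMap_apply, Algebra.linearMap_apply, hd, smul_eq_mul, mul_comm]

/-- denominators -/
def denId (S : Type*) {K : Type*} [CommRing S] [Field K] [Algebra S K] (x : K) : Ideal S where
  carrier := {r | ∃ d, algebraMap S K d = algebraMap S K r * x}
  zero_mem' := ⟨0, by simp⟩
  add_mem' := by
    rintro a b ⟨c, hc⟩ ⟨d, hd⟩
    exact ⟨c + d, by rw [map_add, hc, hd, map_add, add_mul]⟩
  smul_mem' := by
    rintro a b ⟨c, hc⟩
    exact ⟨a * c, by rw [map_mul, hc, smul_eq_mul, map_mul, mul_assoc]⟩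

theorem mem_denId {S K : Type*} [CommRing S] [Field K] [Algebra S K] (x : K) (r : S) :
    r ∈ denId S x ↔ ∃ d, algebraMap S K d = algebraMap S K r * x := Iff.rfl

theorem mem_denId_mul {S K : Type*} [CommRing S] [Field K] [Algebra S K] (x : K) (r b : S) :
    r ∈ denId S (algebraMap S K b * x) ↔ r * b ∈ denId S x := by
  rw [mem_denId, mem_denId, map_mul, mul_assoc]

theorem exists_prime_den {S K : Type*} [CommRing S] [IsNoetherianRing S] [Field K] [Algebra S K]
    (q : Ideal S) [hq : q.IsPrime] (x : K) (hx : denId S x ≤ q) :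
    ∃ b : S, (denId S (algebraMap S K b * x)).IsPrime ∧ denId S (algebraMap S K b * x) ≤ q := by
  let Z : Set (Ideal S) := {J | J ≤ q ∧ ∃ b : S, J = denId S (algebraMap S K b * x)}
  have hZ : Z.Nonempty := ⟨denId S x, hx, 1, by simp⟩
  obtain ⟨J, ⟨hJq, b, hJ⟩, hmax⟩ := set_has_maximal_iff_noetherian.mpr (inferInstance : IsNoetherian S S) Z hZ
  refine ⟨b, ?_, hJ ▸ hJq⟩
  rw [← hJ]
  have key : ∀ c : S, denId S (algebraMap S K c * (algebraMap S K b * x)) ≤ q →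
      denId S (algebraMap S K c * (algebraMap S K b * x)) ≤ J := by
    intro c hc
    have hle : J ≤ denId S (algebraMap S K c * (algebraMap S K b * x)) := by
      intro r hr
      rw [mem_denId_mul, ← hJ]
      exact Ideal.mul_mem_right _ J hr
    have := hmax (denId S (algebraMap S K c * (algebraMap S K b * x))) ⟨hc, c * b, by
      rw [map_mul, mul_assoc]⟩
    by_contra hcon
    exact this (lt_of_le_not_ge hle hcon)
  refine ⟨fun h => hq.ne_top (top_le_iff.mp (h ▸ hJq)), ?_⟩
  intro a c hac
  by_cases hc : denId S (algebraMap S K c * (algebraMap S K b * x)) ≤ q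
  · left
    apply key c hc
    rw [mem_denId_mul, ← hJ]
    exact hac
  · right
    obtain ⟨s, hs, hsq⟩ := SetLike.not_le_iff_exists.mp hc
    rw [mem_denId_mul, ← hJ] at hs
    have h1 : denId S (algebraMap S K s * (algebraMap S K b * x)) ≤ q := by
      intro r hr
      rw [mem_denId_mul, ← hJ] at hr
      exact (hq.mem_or_mem (hJq hr)).resolve_right hsq
    apply key s h1
    rw [mem_denId_mul, ← hJ, mul_comm]
    exact hs

theorem pc_le {S : Type*} [CommRing S] [IsDomain S] (P : Ideal S) [P.IsPrime] :
    P.primeCompl ≤ nonZeroDivisors S := P.primeCompl_le_nonZeroDivisors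

/-- local ring at `P` inside `K` -/
noncomputable def locAt {S : Type*} (K : Type*) [CommRing S] [IsDomain S] [Field K] [Algebra S K]
    [IsFractionRing S K] (P : Ideal S) [P.IsPrime] : Subalgebra S K :=
  Localization.subalgebra.ofField K P.primeCompl (pc_le P)

instance locAt_isLoc {S : Type*} (K : Type*) [CommRing S] [IsDomain S] [Field K] [Algebra S K]
    [IsFractionRing S K] (P : Ideal S) [P.IsPrime] : IsLocalization.AtPrime (locAt K P) P :=
  Localization.subalgebra.isLocalization_ofField K P.primeCompl (pc_le P)

instance locAt_isLocal {S : Type*} (K : Type*) [CommRing S] [IsDomain S] [Field K] [Algebra S K]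
    [IsFractionRing S K] (P : Ideal S) [P.IsPrime] : IsLocalRing (locAt K P) :=
  IsLocalization.AtPrime.isLocalRing _ P

theorem mem_locAt {S K : Type*} [CommRing S] [IsDomain S] [Field K] [Algebra S K]
    [IsFractionRing S K] (P : Ideal S) [P.IsPrime] (x : K) :
    x ∈ locAt K P ↔ ¬ denId S x ≤ P := by
  have : x ∈ locAt K P ↔ ∃ (a s : S) (_ : s ∈ P.primeCompl),
    x = algebraMap S K a * (algebraMap S K s)⁻¹ := Iff.rfl
  rw [this, SetLike.not_le_iff_exists]
  constructor
  · rintro ⟨a, s, hs, rfl⟩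
    have hs0 : algebraMap S K s ≠ 0 := by
      rw [Ne, IsFractionRing.to_map_eq_zero_iff]
      exact nonZeroDivisors.ne_zero (pc_le P hs)
    refine ⟨s, ⟨a, ?_⟩, hs⟩
    field_simp
  · rintro ⟨s, ⟨a, ha⟩, hs⟩
    have hs0 : algebraMap S K s ≠ 0 := by
      rw [Ne, IsFractionRing.to_map_eq_zero_iff]
      exact nonZeroDivisors.ne_zero (pc_le P hs)
    refine ⟨a, s, hs, ?_⟩
    rw [ha]; field_simp

theorem normal_lemma {S K : Type*} [CommRing S] [IsDomain S] [IsNoetherianRing S]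
    [IsIntegrallyClosed S] [Field K] [Algebra S K] [IsFractionRing S K] (q : Ideal S) [q.IsPrime]
    (x : K) (hx : x ∉ locAt K q) :
    ∃ (P : Ideal S) (_ : P.IsPrime), P ≤ q ∧ P ≠ ⊥ ∧
      (∀ Q : Ideal S, Q.IsPrime → Q ≤ P → Q = ⊥ ∨ Q = P) ∧ ValuationRing (locAt K P) ∧
      x ∉ locAt K P := by
  rw [mem_locAt, not_not] at hx
  obtain ⟨b, hP, hPq⟩ := exists_prime_den q x hx
  set y := algebraMap S K b * x with hy
  set P := denId S y with hPdef
  refine ⟨P, hP, hPq, ?_, ?_⟩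
  · obtain ⟨c, s, hs, hcs⟩ := IsFractionRing.div_surjective S y
    have hs0 : s ≠ 0 := nonZeroDivisors.ne_zero hs
    have hs0' : algebraMap S K s ≠ 0 := by rwa [Ne, IsFractionRing.to_map_eq_zero_iff]
    have : s ∈ P := ⟨c, by rw [← hcs]; field_simp⟩
    rintro h
    rw [h] at this
    exact hs0 this
  have hxP : x ∉ locAt K P := by
    rw [mem_locAt, not_not]
    intro r hr
    rw [hPdef, hy, mem_denId_mul]
    exact (denId S x).mul_mem_right _ hr
  have hyP : y ∉ locAt K P := by
    rw [mem_locAt, not_not]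
  have hN : IsNoetherianRing (locAt K P) := IsLocalization.isNoetherianRing P.primeCompl _ inferInstance
  have hI : IsIntegrallyClosed (locAt K P) := isIntegrallyClosed_of_isLocalization _ P.primeCompl (pc_le P)
  have hmap := IsLocalization.AtPrime.map_eq_maximalIdeal P (locAt K P)
  have hprin : (IsLocalRing.maximalIdeal (locAt K P)).IsPrincipal := by
    refine local_principal (K := K) y ?_ ?_
    · rintro ⟨d, hd⟩
      apply hyP
      rw [← hd]; exact d.2
    · intro c hc
      suffices c ∈ denId (locAt K P) y from this
      rw [← hmap] at hc
      refine (Ideal.map_le_iff_le_comap.mpr ?_ : Ideal.map _ P ≤ denId (locAt K P) y) hc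
      rintro r ⟨d, hd⟩
      exact ⟨algebraMap S _ d, hd⟩
  have tf := tfae_of_isNoetherianRing_of_isLocalRing_of_isDomain (locAt K P)
  have h4 := (tf.out 4 3).mp hprin
  have h1 := (tf.out 4 1).mp hprin
  refine ⟨?_, h1, hxP⟩
  intro Q hQ hQP
  by_cases hQ0 : Q = ⊥
  · exact Or.inl hQ0
  right
  have hdis : Disjoint (P.primeCompl : Set S) Q := by
    rw [Set.disjoint_left]
    intro z hz hzQ
    exact hz (hQP hzQ)
  have hu := IsLocalization.under_map_of_isPrime_disjoint P.primeCompl (locAt K P) hQ hdis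
  have hpr := IsLocalization.isPrime_of_isPrime_disjoint P.primeCompl (locAt K P) Q hQ hdis
  have := h4.2 _ (fun h => hQ0 (by
    rw [h] at hu
    rw [← hu]
    have : FaithfulSMul S (locAt K P) := (faithfulSMul_iff_algebraMap_injective _ _).mpr
      (IsLocalization.injective _ (pc_le P))
    exact Ideal.under_bot S _) ) hpr
  rw [this] at hu
  rw [← hu, IsLocalization.AtPrime.under_maximalIdeal (locAt K P) P]

theorem sat_chain {α : Type*} [PartialOrder α] [OrderBot α] (c : LTSeries α)
    (h : (c.length : ℕ∞) = Order.height c.last) :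
    c.head = ⊥ ∧ ∀ i : Fin c.length, c i.castSucc ⋖ c i.succ := by
  have hi := Order.height_eq_index_of_length_eq_height_last h
  refine ⟨?_, fun i => ⟨c.strictMono (Fin.castSucc_lt_succ), fun x h1 h2 => ?_⟩⟩
  · have := hi 0
    have h2 : Order.height c.head = 0 := by
      change Order.height (c 0) = 0
      rw [this]; simp
    rw [Order.height_eq_zero] at h2
    exact h2.eq_bot
  · have k1 := Order.height_add_one_le h1
    have k2 := Order.height_add_one_le h2
    have k3 := (add_le_add_left k1 1).trans k2
    rw [hi, hi] at k3
    simp only [Fin.val_succ, Fin.val_castSucc] at k3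
    norm_cast at k3
    omega

theorem cat_height {T : Type u} [CommRing T] [IsDomain T] [IsNoetherianRing T]
    (hT : IsCatenaryRing T) (Q P : PrimeSpectrum T) (h : Q ⋖ P) :
    P.asIdeal.height = Q.asIdeal.height + 1 := by
  obtain ⟨c, hc, hcl⟩ := Ideal.exists_ltSeries_length_eq_height Q.asIdeal
  obtain ⟨d, hd, hdl⟩ := Ideal.exists_ltSeries_length_eq_height P.asIdeal
  have hc' : c.last = Q := hc
  have hd' : d.last = P := hd
  have hcs := sat_chain c (by rw [hcl, hc', PrimeSpectrum.height_eq_orderHeight])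
  have hds := sat_chain d (by rw [hdl, hd', PrimeSpectrum.height_eq_orderHeight])
  have hrel : c.last < P := hc' ▸ h.lt
  let c' : LTSeries (PrimeSpectrum T) := c.snoc P hrel
  have := hT c' d ?_ ?_ ?_ hds.2
  · rw [← hdl, ← hcl, ← this]
    simp [c']
  · rw [hds.1]
    simp only [c']
    rw [RelSeries.head_snoc, hcs.1]
  · rw [hd']
    exact RelSeries.last_snoc ..
  · intro i
    have key : ∀ i : Fin (c.length + 1), c' i.castSucc ⋖ c' i.succ := by
      intro i
      refine Fin.lastCases ?_ (fun i => ?_) i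
      · have e1 : c' (Fin.last c.length).castSucc = Q := by
          rw [← hc']; exact RelSeries.snoc_castSucc ..
        have e2 : c' (Fin.last c.length).succ = P := RelSeries.last_snoc' ..
        rw [e1, e2]; exact h
      · have e1 : c' i.castSucc.castSucc = c i.castSucc := RelSeries.snoc_castSucc ..
        have e2 : c' i.castSucc.succ = c i.succ := RelSeries.snoc_castSucc c P hrel i.succ
        rw [e1, e2]; exact hcs.2 i
    exact key i

theorem poly_low {B : Type*} [CommRing B] (P : Ideal (Polynomial B)) [hP : P.IsPrime]
    (f : Polynomial B) (hf : f.Monic) (hfP : f ∈ P) :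
    (P.comap Polynomial.C).height + 1 ≤ P.height := by
  let F : PrimeSpectrum B → PrimeSpectrum (Polynomial B) := fun p =>
    ⟨p.asIdeal.map Polynomial.C, (Ideal.isPrime_map_C_iff_isPrime _).mpr p.2⟩
  have hcm : ∀ I : Ideal B, (I.map Polynomial.C).comap Polynomial.C = I := by
    intro I
    ext x
    rw [Ideal.mem_comap, Ideal.mem_map_C_iff]
    constructor
    · intro h; simpa using h 0
    · intro h n
      rw [Polynomial.coeff_C]
      split_ifs
      exacts [h, I.zero_mem]
  have hF : StrictMono F := by
    apply Monotone.strictMono_of_injective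
    · intro p q h; exact Ideal.map_mono h
    · intro p q h
      ext1
      rw [← hcm p.asIdeal, ← hcm q.asIdeal]
      exact congrArg (fun z => Ideal.comap Polynomial.C z.asIdeal) h
  have h1 := Order.height_le_height_apply_of_strictMono F hF ⟨P.comap Polynomial.C, inferInstance⟩
  have h2 : F ⟨P.comap Polynomial.C, inferInstance⟩ < ⟨P, hP⟩ := by
    refine lt_of_le_of_ne ?_ ?_
    · exact (Ideal.map_comap_le (f := Polynomial.C) (K := P))
    · intro h
      have h3 : (P.comap Polynomial.C).map Polynomial.C = P := congrArg PrimeSpectrum.asIdeal h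
      rw [← h3, Ideal.mem_map_C_iff] at hfP
      have := hfP f.natDegree
      rw [Polynomial.coeff_natDegree, hf.leadingCoeff] at this
      exact (inferInstance : (P.comap Polynomial.C).IsPrime).ne_top ((Ideal.eq_top_iff_one _).mpr this)
  have h3 := Order.height_add_one_le h2
  have h4 := (add_le_add_left h1 1).trans h3
  rwa [← PrimeSpectrum.height_eq_orderHeight, ← PrimeSpectrum.height_eq_orderHeight] at h4

theorem mv_low {R : Type*} [CommRing R] (n : ℕ) (P : Ideal (MvPolynomial (Fin n) R)) (hP : P.IsPrime)
    (h : ∀ i, ∃ f : Polynomial R, f.Monic ∧ Polynomial.aeval (MvPolynomial.X i) f ∈ P) :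
    (P.comap MvPolynomial.C).height + n ≤ P.height := by
  induction n with
  | zero =>
    have := RingEquiv.height_comap (MvPolynomial.isEmptyRingEquiv R (Fin 0)).symm P
    simp only [Nat.cast_zero, add_zero]
    rw [← this]
    apply le_of_eq
    congr 1
  | succ n ih =>
    let e := (MvPolynomial.finSuccEquiv R n)
    let P' : Ideal (Polynomial (MvPolynomial (Fin n) R)) := P.comap e.symm.toRingEquiv
    have hP' : P'.IsPrime := Ideal.comap_isPrime _ _
    have hht : P'.height = P.height := RingEquiv.height_comap e.symm.toRingEquiv P
    have hmem : ∀ x, x ∈ P → e x ∈ P' := by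
      intro x hx
      change e.symm (e x) ∈ P
      rwa [AlgEquiv.symm_apply_apply]
    have h1 := ih (P'.comap Polynomial.C) inferInstance (fun i => by
      obtain ⟨f, hf, hfP⟩ := h i.succ
      refine ⟨f, hf, ?_⟩
      have := hmem _ hfP
      rw [← Polynomial.aeval_algHom_apply, MvPolynomial.finSuccEquiv_X_succ] at this
      rw [Ideal.mem_comap]
      convert this using 1
      have := Polynomial.aeval_algHom_apply (Polynomial.CAlgHom (R := R) (A := MvPolynomial (Fin n) R))
        (MvPolynomial.X i) f
      exact this.symm)
    obtain ⟨f, hf, hfP⟩ := h 0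
    have h2 := poly_low P' (f.map MvPolynomial.C) (hf.map _) (by
      have := hmem _ hfP
      rw [← Polynomial.aeval_algHom_apply, MvPolynomial.finSuccEquiv_X_zero] at this
      convert this using 1
      rfl)
    have h3 : (P'.comap Polynomial.C).comap MvPolynomial.C = P.comap MvPolynomial.C := by
      ext r
      simp only [Ideal.mem_comap, P']
      have : e.symm (Polynomial.C (MvPolynomial.C r)) = MvPolynomial.C r := by
        rw [AlgEquiv.symm_apply_eq]
        exact (AlgEquiv.commutes e r).symm
      change e.symm (Polynomial.C (MvPolynomial.C r)) ∈ P ↔ _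
      rw [this]
    rw [h3] at h1
    rw [← hht, Nat.cast_add, Nat.cast_one, ← add_assoc]
    exact (add_le_add_left h1 1).trans h2

theorem mv_up {R : Type*} [CommRing R] [IsDomain R] [IsNoetherianRing R] (n : ℕ)
    (Q : Ideal (MvPolynomial (Fin n) R)) [hQ : Q.IsPrime]
    (h : ∀ r : R, MvPolynomial.C r ∈ Q → r = 0) : Q.height ≤ n := by
  have hd : Disjoint (((nonZeroDivisors R).map (MvPolynomial.C (σ := Fin n)) :
      Submonoid (MvPolynomial (Fin n) R)) : Set (MvPolynomial (Fin n) R)) (Q : Set _) := by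
    rw [Set.disjoint_left]
    rintro _ ⟨r, hr, rfl⟩ hrQ
    exact nonZeroDivisors.ne_zero hr (h r hrQ)
  letI : Algebra (MvPolynomial (Fin n) R) (MvPolynomial (Fin n) (FractionRing R)) :=
    MvPolynomial.algebraMvPolynomial
  haveI : IsLocalization ((nonZeroDivisors R).map (MvPolynomial.C (σ := Fin n)))
    (MvPolynomial (Fin n) (FractionRing R)) := MvPolynomial.isLocalization _ _
  have h1 := IsLocalization.height_map_of_disjoint
    (S := MvPolynomial (Fin n) (FractionRing R)) _ Q hd
  have h2 := IsLocalization.isPrime_of_isPrime_disjoint _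
    (MvPolynomial (Fin n) (FractionRing R)) Q hQ hd
  rw [← h1]
  have h3 := Ideal.height_le_ringKrullDim_of_isPrime (I := Q.map (algebraMap _ (MvPolynomial (Fin n) (FractionRing R))))
  rw [MvPolynomial.ringKrullDim_of_isNoetherianRing, ringKrullDim_eq_zero_of_field, Nat.card_fin, zero_add] at h3
  exact_mod_cast h3

theorem cat_lemma {R : Type u} [CommRing R] [IsDomain R] [IsNoetherianRing R]
    (hcat : IsUniversallyCatenary R) {S : Type*} [CommRing S] [IsDomain S] [Algebra R S]
    [Module.Finite R S] (hinj : Function.Injective (algebraMap R S)) (P : Ideal S) [hPp : P.IsPrime]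
    (hP0 : P ≠ ⊥) (hP : ∀ Q : Ideal S, Q.IsPrime → Q ≤ P → Q = ⊥ ∨ Q = P) :
    (P.comap (algebraMap R S)).height ≤ 1 := by
  obtain ⟨n, f, hf⟩ := Algebra.FiniteType.iff_quotient_mvPolynomial''.mp
    (inferInstance : Algebra.FiniteType R S)
  let Q : PrimeSpectrum (MvPolynomial (Fin n) R) := ⟨RingHom.ker f.toRingHom, RingHom.ker_isPrime _⟩
  let Pt : PrimeSpectrum (MvPolynomial (Fin n) R) :=
    ⟨P.comap f.toRingHom, Ideal.comap_isPrime _ _⟩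
  have hcov : Q ⋖ Pt := by
    refine ⟨lt_of_le_of_ne ?_ ?_, ?_⟩
    · intro x hx
      have : f x = 0 := hx
      change f x ∈ P
      rw [this]; exact P.zero_mem
    · intro h
      apply hP0
      rw [eq_bot_iff]
      intro s hs
      obtain ⟨x, rfl⟩ := hf s
      have : x ∈ Q.asIdeal := by rw [h]; exact hs
      exact this
    · intro J h1 h2
      have hker : RingHom.ker f.toRingHom ≤ J.asIdeal := h1.le
      have hJp : (J.asIdeal.map f.toRingHom).IsPrime := Ideal.map_isPrime_of_surjective hf hker
      have hcm : (J.asIdeal.map f.toRingHom).comap f.toRingHom = J.asIdeal := by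
        rw [Ideal.comap_map_of_surjective' f.toRingHom hf, sup_eq_left]; exact hker
      rcases hP _ hJp (Ideal.map_le_iff_le_comap.mpr h2.le) with h | h
      · apply h1.ne
        ext1
        rw [← hcm, h]; rfl
      · apply h2.ne
        ext1
        rw [← hcm, h]
  have e1 := cat_height (hcat n) Q Pt hcov
  have e2 : Q.asIdeal.height ≤ n := mv_up n Q.asIdeal (hQ := Q.2) (fun r hr => by
    have : f (MvPolynomial.C r) = 0 := hr
    have h2 : f (algebraMap R _ r) = 0 := this
    rw [AlgHom.commutes] at h2
    exact hinj (by rw [h2, map_zero]))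
  have e3 := mv_low n Pt.asIdeal Pt.2 (fun i => by
    obtain ⟨g, hg, hgi⟩ := Algebra.IsIntegral.isIntegral (R := R) (f (MvPolynomial.X i))
    refine ⟨g, hg, ?_⟩
    change f _ ∈ P
    rw [← Polynomial.aeval_algHom_apply, Polynomial.aeval_def, hgi]
    exact P.zero_mem)
  have e4 : Pt.asIdeal.comap MvPolynomial.C = P.comap (algebraMap R S) := by
    ext r
    change f (algebraMap R _ r) ∈ P ↔ _
    rw [AlgHom.commutes]; rfl
  rw [e4] at e3
  have e5 : (P.comap (algebraMap R S)).height + n ≤ 1 + n := by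
    refine e3.trans ?_
    rw [e1, add_comm]
    gcongr
  exact (ENat.add_le_add_iff_right (ENat.natCast_ne_top n)).mp e5

theorem descend_frac {R A : Type u} [CommRing R] [IsDomain R] [Ring A] [Algebra R A]
    [Module.Finite R A] (hs : ∀ p : PrimeSpectrum R,
      IsSplitAlgebra (resFieldAt R p) (resFieldAt R p ⊗[R] A))
    {L : Type u} [Field L] [Algebra R L] (φ : FractionRing R →ₐ[R] L)
    (u : L ⊗[R] A) (hu : IsIdempotentElem u) (hc : ∀ x, u * x = x * u) :
    ∃ f : FractionRing R ⊗[R] A, IsIdempotentElem f ∧ (∀ x, f * x = x * f) ∧ bc A φ f = u := by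
  have : IsFractionRing R (resFieldAt R ⊥) :=
    inferInstanceAs (IsFractionRing R (⊥ : Ideal R).ResidueField)
  let e := (FractionRing.algEquiv R (resFieldAt R ⊥)).symm.toAlgHom
  obtain ⟨f, hf, hfc, hfu⟩ := bc_descend (φ.comp e) (hs ⊥) u hu hc
  exact ⟨bc A e f, hf.map _, bc_central e f hfc, by rw [bc_bc, hfu]⟩

theorem cbc_bc {R D K L A : Type*} [CommRing R] [CommRing D] [Algebra R D] [CommRing K] [CommRing L]
    [Algebra D K] [Algebra D L] [Algebra R K] [Algebra R L] [IsScalarTower R D K]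
    [IsScalarTower R D L] [Ring A] [Algebra R A] (φ : K →ₐ[D] L) (z : K ⊗[D] (D ⊗[R] A)) :
    cbc R D L A (bc (D ⊗[R] A) φ z) = bc A (φ.restrictScalars R) (cbc R D K A z) := by
  induction z with
  | zero => simp
  | add x y hx hy => simp only [map_add, hx, hy]
  | tmul c w =>
    induction w with
    | zero => simp
    | add x y hx hy => simp only [TensorProduct.tmul_add, map_add, hx, hy]
    | tmul d a =>
      rw [bc_tmul, cbc_tmul, cbc_tmul, bc_tmul, AlgHom.restrictScalars_apply, map_smul]

theorem IsOC.congr {B B' : Type*} [Ring B] [Ring B'] {ι : Type*} {e : ι → B} (he : IsOC e)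
    (f : B ≃+* B') : IsOC (fun i => f (e i)) :=
  he.map f.toRingHom f.injective (fun z hz x => by
    obtain ⟨y, rfl⟩ := f.surjective x
    have := congrArg f (hz y)
    rwa [map_mul, map_mul] at this)

theorem IsOC.sub {B : Type*} [Ring B] {ι κ : Type*} {e : ι → B} (he : IsOC e)
    (f : κ → ι) (hf : Function.Injective f) : IsOC (fun i => e (f i)) :=
  ⟨fun i => he.idem _, fun i => he.cent _, fun i => he.ne _,
    fun i j hij => he.orth _ _ (fun h => hij (hf h))⟩

theorem val_apply {R A : Type u} [CommRing R] [IsDomain R] [Ring A] [Algebra R A]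
    [Module.Finite R A] [Module.Projective R A] (hs : ∀ p : PrimeSpectrum R,
      IsSplitAlgebra (resFieldAt R p) (resFieldAt R p ⊗[R] A))
    {D : Type u} [CommRing D] [IsDomain D] [ValuationRing D] [Algebra R D]
    [Algebra D (FractionRing R)] [IsScalarTower R D (FractionRing R)]
    [IsFractionRing D (FractionRing R)] {k : Type u} [Field k] [Algebra R k]
    (hN : numBlocks (FractionRing R ⊗[R] A) ≤ numBlocks (k ⊗[R] A))
    (ψ : k →ₐ[R] (IsLocalRing.maximalIdeal D).ResidueField)
    (u : FractionRing R ⊗[R] A) (hu : IsIdempotentElem u) (hc : ∀ x, u * x = x * u) :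
    ∃ w : D ⊗[R] A, bc A (IsScalarTower.toAlgHom R D (FractionRing R)) w = u := by
  let K := FractionRing R
  obtain ⟨e, he⟩ := exists_isOC k (k ⊗[R] A)
  have hN' : numBlocks (K ⊗[D] (D ⊗[R] A)) ≤ numBlocks (K ⊗[R] A) := by
    obtain ⟨e, he⟩ := exists_isOC K (K ⊗[D] (D ⊗[R] A))
    simpa using (he.congr (cbc R D K A).toRingEquiv).card_le K
  have he1 := he.bc ψ ψ.toRingHom.injective
  have he2 := he1.congr (cbc R D (IsLocalRing.maximalIdeal D).ResidueField A).symm.toRingEquiv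
  have he3 := he2.sub (Fin.castLE (hN'.trans hN)) (Fin.castLE_injective _)
  obtain ⟨b, hb⟩ := val_lemma (K := K) (B := D ⊗[R] A) (fun L _ _ φ u hu hc => by
    let _ : Algebra R L := ((algebraMap D L).comp (algebraMap R D)).toAlgebra
    have : IsScalarTower R D L := IsScalarTower.of_algebraMap_eq' rfl
    obtain ⟨f, hf, hfc, hfu⟩ := descend_frac hs (φ.restrictScalars R) (cbc R D L A u) (hu.map _)
      (fun x => by
        obtain ⟨y, rfl⟩ := (cbc R D L A).surjective x
        rw [← map_mul, hc, map_mul])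
    refine ⟨(cbc R D K A).symm f, hf.map _, fun x => ?_, ?_⟩
    · apply (cbc R D K A).injective
      rw [map_mul, map_mul, AlgEquiv.apply_symm_apply, hfc]
    · apply (cbc R D L A).injective
      rw [cbc_bc, AlgEquiv.apply_symm_apply, hfu]) _ he3 ((cbc R D K A).symm u) (hu.map _)
      (fun x => by
        apply (cbc R D K A).injective
        rw [map_mul, map_mul, AlgEquiv.apply_symm_apply, hc])
  refine ⟨b, ?_⟩
  rw [← cbc_one, hb, AlgEquiv.apply_symm_apply]

theorem comap_max {R S : Type*} (K : Type*) [CommRing R] [CommRing S] [IsDomain S] [Algebra R S]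
    [Field K] [Algebra S K] [IsFractionRing S K] [Algebra R K] [IsScalarTower R S K]
    (P : Ideal S) [P.IsPrime] :
    P.comap (algebraMap R S) =
      (IsLocalRing.maximalIdeal (locAt K P)).comap (Algebra.ofId R (locAt K P)).toRingHom := by
  have h := IsLocalization.AtPrime.under_maximalIdeal (locAt K P) P
  conv_lhs => rw [← h]
  rw [Ideal.under, Ideal.comap_comap, ← IsScalarTower.algebraMap_eq R S (locAt K P)]
  rfl

theorem main_codim {R A : Type u} [CommRing R] [IsDomain R] [IsNoetherianRing R] [Ring A]
    [Algebra R A] [Module.Finite R A] [Module.Projective R A] (hs : ∀ p : PrimeSpectrum R,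
      IsSplitAlgebra (resFieldAt R p) (resFieldAt R p ⊗[R] A)) (hcat : IsUniversallyCatenary R)
    {S : Type u} [CommRing S] [IsDomain S] [Algebra R S] [Module.Finite R S] [IsIntegrallyClosed S]
    [Algebra S (FractionRing R)] [IsScalarTower R S (FractionRing R)]
    [IsFractionRing S (FractionRing R)] (q : PrimeSpectrum R)
    (hq : ∀ p < q, numBlocks (FractionRing R ⊗[R] A) ≤ numBlocks (resFieldAt R p ⊗[R] A))
    (hht : ¬ q.asIdeal.height ≤ 1) :
    numBlocks (FractionRing R ⊗[R] A) ≤ numBlocks (resFieldAt R q ⊗[R] A) := by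
  let K := FractionRing R
  have hinj : Function.Injective (algebraMap R S) := by
    have h : Function.Injective (algebraMap R K) := IsFractionRing.injective R K
    rw [IsScalarTower.algebraMap_eq R S K] at h
    exact Function.Injective.of_comp h
  haveI : IsNoetherianRing S := IsNoetherianRing.of_finite R S
  obtain ⟨q', -, hq'p, hq'⟩ := Ideal.exists_ideal_over_prime_of_isIntegral q.asIdeal (⊥ : Ideal S)
    (by rw [Ideal.comap_bot_of_injective _ hinj]; exact bot_le)
  obtain ⟨e, he⟩ := exists_isOC K (K ⊗[R] A)
  obtain ⟨m, a, l, hl⟩ := exists_dual R A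
  have claim : ∀ i j, coord K (l j) (e i) ∈ locAt K q' := by
    intro i j
    by_contra hx
    obtain ⟨P, hP, hPq, hP0, hPm, hV, hxP⟩ := normal_lemma q' _ hx
    have h1 := cat_lemma hcat hinj P hP0 hPm
    let p : PrimeSpectrum R := ⟨P.comap (algebraMap R S), Ideal.comap_isPrime _ _⟩
    have hpq : p < q := by
      refine lt_of_le_of_ne ?_ ?_
      · change P.comap (algebraMap R S) ≤ q.asIdeal
        rw [← hq']; exact Ideal.comap_mono hPq
      · intro h
        apply hht
        rw [← h]; exact h1
    haveI : IsFractionRing (locAt K P) K := inferInstanceAs (IsFractionRing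
      (Localization.subalgebra.ofField K P.primeCompl (pc_le P)) K)
    obtain ⟨w, hw⟩ := val_apply (D := locAt K P) (k := p.asIdeal.ResidueField) hs (hq p hpq)
      (Ideal.ResidueField.mapₐ p.asIdeal (IsLocalRing.maximalIdeal (locAt K P))
        (Algebra.ofId R (locAt K P)) (comap_max K P)) (e i) (he.idem i) (he.cent i)
    apply hxP
    rw [← hw, coord_bc]
    exact (coord (locAt K P) (l j) w).2
  let D := locAt K q'
  let φ : D →ₐ[R] K := IsScalarTower.toAlgHom R D K
  have hφ : Function.Injective φ := Subtype.val_injective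
  let E : Fin (numBlocks (K ⊗[R] A)) → D ⊗[R] A := fun i => ∑ j, (⟨_, claim i j⟩ : D) ⊗ₜ a j
  have hE : ∀ i, bc A φ (E i) = e i := by
    intro i
    conv_rhs => rw [coord_sum hl K (e i)]
    simp only [E, map_sum, bc_tmul]
    rfl
  have hbi := bc_injective (A := A) φ hφ
  have hEi : ∀ i, IsIdempotentElem (E i) := fun i => hbi (by
    rw [map_mul, hE]; exact he.idem i)
  have hEc : ∀ i x, E i * x = x * E i := fun i x => hbi (by
    rw [map_mul, map_mul, hE]; exact he.cent i _)
  have hEo : ∀ i j, i ≠ j → E i * E j = 0 := fun i j hij => hbi (by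
    rw [map_mul, map_zero, hE, hE]; exact he.orth i j hij)
  let M := IsLocalRing.maximalIdeal D
  let π : D →ₐ[R] M.ResidueField := IsScalarTower.toAlgHom R D M.ResidueField
  have hoc : IsOC (fun i => bc A π (E i)) := by
    refine ⟨fun i => (hEi i).map _, fun i => bc_central π _ (hEc i), fun i h0 => ?_,
      fun i j hij => by rw [← map_mul, hEo i j hij, map_zero]⟩
    obtain ⟨t, ht, h⟩ := spread_zero M (E i) 1 (hEi i) IsIdempotentElem.one (fun x => by
      rw [map_mul, map_mul, show bc A _ (E i) = 0 from h0, zero_mul, zero_mul])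
    have htu : IsUnit t := by
      by_contra h'
      exact ht h'
    have h2 := h 1
    rw [mul_one, mul_one, htu.smul_eq_zero] at h2
    apply he.ne i
    rw [← hE, h2, map_zero]
  exact nb_le_of_oc (k := q.asIdeal.ResidueField) (Ideal.ResidueField.mapₐ q.asIdeal M (Algebra.ofId R D)
    (hq'.symm.trans (comap_max K q'))) (hs q) hoc

theorem part5 {R A : Type u} [CommRing R] [IsDomain R] [IsNoetherianRing R] [Ring A]
    [Algebra R A] [Module.Finite R A] [Module.Projective R A] (hs : ∀ p : PrimeSpectrum R,
      IsSplitAlgebra (resFieldAt R p) (resFieldAt R p ⊗[R] A)) (hcat : IsUniversallyCatenary R)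
    (hj : IsJapaneseRing R) : IsReducedWeilDivisor {p : PrimeSpectrum R |
          numBlocks (resFieldAt R p ⊗[R] A) < numBlocks (FractionRing R ⊗[R] A)} := by
  set X : Set (PrimeSpectrum R) := {p : PrimeSpectrum R |
          numBlocks (resFieldAt R p ⊗[R] A) < numBlocks (FractionRing R ⊗[R] A)} with hX
  have hcl : IsClosed X := by
    rcases h : numBlocks (FractionRing R ⊗[R] A) with _ | n
    · have : X = ∅ := by ext; simp [hX, h]
      rw [this]; exact isClosed_empty
    · convert (lsc hs).isClosed_preimage n using 1
      ext; simp [hX, h]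
  have hclosed : ∀ C, IsIrredCompOf C X → IsClosed C := by
    intro C hC
    have := hC.2.2 (closure C) hC.1.closure (closure_minimal hC.2.1 hcl) subset_closure
    rw [← this]; exact isClosed_closure
  constructor
  · obtain ⟨T, hTf, hTc, hTi, hT⟩ :=
      TopologicalSpace.NoetherianSpace.exists_finite_set_isClosed_irreducible hcl
    refine hTf.subset fun C hC => ?_
    lift T to Finset (Set (PrimeSpectrum R)) using hTf
    obtain ⟨t, htT, ht⟩ := isIrreducible_iff_sUnion_isClosed.1 hC.1 T hTc (hT ▸ hC.2.1)
    have htX : t ⊆ X := by rw [hT]; exact Set.subset_sUnion_of_mem htT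
    rw [← hC.2.2 t (hTi t htT) htX ht]
    exact htT
  · intro C hC
    obtain ⟨q, hqC⟩ := QuasiSober.sober hC.1 (hclosed C hC)
    have hqC : closure {q} = C := hqC
    have hqX : q ∈ X := hC.2.1 (hqC ▸ subset_closure rfl)
    refine ⟨q, by rw [hqC, (hclosed C hC).closure_eq], ?_⟩
    have hmin : ∀ p < q, numBlocks (FractionRing R ⊗[R] A) ≤ numBlocks (resFieldAt R p ⊗[R] A) := by
      intro p hp
      by_contra hlt
      have hpX : p ∈ X := not_le.mp hlt
      have hsp : q ∈ closure {p} :=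
        ((PrimeSpectrum.le_iff_specializes p q).mp hp.le).mem_closure
      have h1 := hC.2.2 (closure {p}) isIrreducible_singleton.closure
        (closure_minimal (Set.singleton_subset_iff.2 hpX) hcl)
        (hqC ▸ closure_minimal (Set.singleton_subset_iff.2 hsp) isClosed_closure)
      have h2 : p ∈ closure {q} := by rw [hqC, ← h1]; exact subset_closure rfl
      have h3 : q ≤ p := (PrimeSpectrum.le_iff_specializes q p).mpr
        (specializes_iff_mem_closure.2 h2)
      exact absurd hp (not_lt_of_ge h3)
    rw [← PrimeSpectrum.height_eq_orderHeight]
    apply le_antisymm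
    · by_contra hht
      haveI := hj (FractionRing R)
      haveI : IsFractionRing (integralClosure R (FractionRing R)) (FractionRing R) :=
        integralClosure.isFractionRing_of_finite_extension (FractionRing R) (FractionRing R)
      haveI : IsIntegrallyClosed (integralClosure R (FractionRing R)) :=
        integralClosure.isIntegrallyClosedOfFiniteExtension (FractionRing R)
      exact absurd hqX (not_lt_of_ge
        (main_codim hs hcat (S := integralClosure R (FractionRing R)) q hmin hht))
    · rw [ENat.one_le_iff_ne_zero]
      intro h0
      have h0 : q.asIdeal = ⊥ := Ideal.height_eq_zero_iff_eq_bot.mp h0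
      have : q = ⊥ := PrimeSpectrum.ext h0
      rw [this] at hqX
      exact (ne_of_lt hqX) (nb_bot hs)

/-- **Lemma `split_fibers_results`.** -/
theorem stmt7 (R : Type u) [CommRing R] [IsDomain R]
    (A : Type u) [Ring A] [Algebra R A]
    [Module.Finite R A] [Module.Flat R A] [Module.FinitePresentation R A]
    (hsplitfibers : ∀ p : PrimeSpectrum R,
      IsSplitAlgebra (resFieldAt R p) (resFieldAt R p ⊗[R] A)) :
    LowerSemicontinuous (fun p : PrimeSpectrum R => numBlocks (resFieldAt R p ⊗[R] A)) ∧
    (∀ n : ℕ, IsLocallyClosed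
      {p : PrimeSpectrum R | numBlocks (resFieldAt R p ⊗[R] A) = n}) ∧
    (∀ p : PrimeSpectrum R,
      numBlocks (resFieldAt R p ⊗[R] A) ≤ numBlocks (FractionRing R ⊗[R] A)) ∧
    (∃ p : PrimeSpectrum R,
      numBlocks (resFieldAt R p ⊗[R] A) = numBlocks (FractionRing R ⊗[R] A)) ∧
    (IsUniversallyCatenary R → IsJapaneseRing R → IsNoetherianRing R →
      ({p : PrimeSpectrum R |
          numBlocks (resFieldAt R p ⊗[R] A) < numBlocks (FractionRing R ⊗[R] A)} = ∅ ∨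
        IsReducedWeilDivisor {p : PrimeSpectrum R |
          numBlocks (resFieldAt R p ⊗[R] A) < numBlocks (FractionRing R ⊗[R] A)})) := by
  have hproj : Module.Projective R A := Module.Flat.projective_of_finitePresentation
  exact ⟨lsc hsplitfibers, loc_closed hsplitfibers, le_bot hsplitfibers, ⟨⊥, nb_bot hsplitfibers⟩,
    fun hcat hj hN => Or.inr (part5 hsplitfibers hcat hj)⟩
end

section
/- Let φ: R → S be a faithfully flat morphism of integral domains, let A be a finite flat R-algebra, and let K and L be the fraction fields of R and S respectively. If the number of block idempotents of A^K = K ⊗_R A equals the number of block idempotents of A^L = L ⊗_R A, then the canonical morphism φ_A: A → A^S = S ⊗_R A is block bijective. -/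
open TensorProduct

def BlockBijective {B C : Type*} [Ring B] [Ring C] (φ : B → C) : Prop :=
  Set.BijOn φ {e | IsBlockIdem e} {e | IsBlockIdem e}

/-- central idempotents -/
def CI (B : Type*) [Ring B] : Type _ := {e : B // IsIdempotentElem e ∧ ∀ x : B, e * x = x * e}

def ciEquiv (B : Type*) [Ring B] : CI B ≃ {e : Subring.center B // IsIdempotentElem e} where
  toFun e := ⟨⟨e.1, Subring.mem_center_iff.2 fun x => (e.2.2 x).symm⟩, Subtype.ext e.2.1⟩
  invFun e := ⟨e.1.1, congrArg Subtype.val e.2,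
    fun x => (Subring.mem_center_iff.1 e.1.2 x).symm⟩
  left_inv _ := rfl
  right_inv _ := rfl

lemma isAtom_iff_block {B : Type*} [Ring B] (e : {e : Subring.center B // IsIdempotentElem e}) :
    IsAtom e ↔ IsBlockIdem (e.1.1 : B) := by
  have hidem : e.1.1 * e.1.1 = e.1.1 := congrArg Subtype.val e.2
  have hc : ∀ x : B, e.1.1 * x = x * e.1.1 := fun x => (Subring.mem_center_iff.1 e.1.2 x).symm
  have hbot : ∀ f : {e : Subring.center B // IsIdempotentElem e}, f = ⊥ ↔ f.1.1 = 0 := by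
    intro f
    constructor
    · rintro rfl; rfl
    · intro h; exact Subtype.ext (Subtype.ext h)
  constructor
  · rintro ⟨h0, h1⟩
    refine ⟨hidem, fun h => h0 ((hbot e).2 h), hc, ?_⟩
    intro f g hf hg hff hgg hfg hsum
    let f' := ciEquiv B ⟨f, hff, hf⟩
    have hfe : f * e.1.1 = f := by rw [← hsum, mul_add, hfg, hff.eq, add_zero]
    have hle : f' ≤ e := Subtype.ext hfe
    rcases hle.lt_or_eq with h | h
    · left; exact (hbot f').1 (h1 f' h)
    · right
      have : f = e.1.1 := congrArg (fun z => z.1.1) h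
      rw [← this] at hsum
      simpa using hsum
  · rintro ⟨-, h0, -, h1⟩
    refine ⟨fun h => h0 ((hbot e).1 h), ?_⟩
    intro f hf
    have hle : f.1.1 * e.1.1 = f.1.1 := congrArg Subtype.val (show f.1 * e.1 = f.1 from hf.le)
    have hfi : f.1.1 * f.1.1 = f.1.1 := congrArg Subtype.val f.2
    have hfc : ∀ x : B, f.1.1 * x = x * f.1.1 :=
      fun x => (Subring.mem_center_iff.1 f.1.2 x).symm
    have hef : e.1.1 * f.1.1 = f.1.1 := by rw [hc, hle]
    rcases h1 f.1.1 (e.1.1 - f.1.1) hfc (fun x => by rw [sub_mul, mul_sub, hc, hfc]) hfi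
      (by rw [IsIdempotentElem, sub_mul, mul_sub, mul_sub, hidem, hle, hef, hfi]; simp)
      (by rw [mul_sub, hle, hfi, sub_self]) (by simp) with h | h
    · exact (hbot f).2 h
    · exact absurd (Subtype.ext (Subtype.ext (sub_eq_zero.1 h).symm)) hf.ne

lemma finite_CI (K B : Type*) [Field K] [Ring B] [Algebra K B] [Module.Finite K B] :
    Finite (CI B) := by
  have : IsArtinianRing (Subalgebra.center K B) := IsArtinianRing.of_finite K _
  have h2 : Finite {e : Subalgebra.center K B | IsIdempotentElem e} := by
    have : Finite (TopologicalSpace.Clopens (PrimeSpectrum (Subalgebra.center K B))) :=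
      Finite.of_injective (fun s => (s : Set (PrimeSpectrum (Subalgebra.center K B))))
        SetLike.coe_injective
    exact Finite.of_equiv _
      (PrimeSpectrum.isIdempotentElemEquivClopens (R := Subalgebra.center K B)).symm.toEquiv
  let F : CI B → {e : Subalgebra.center K B | IsIdempotentElem e} := fun e =>
    ⟨⟨e.1, Subalgebra.mem_center_iff.2 fun x => (e.2.2 x).symm⟩, Subtype.ext e.2.1⟩
  refine Finite.of_injective F ?_
  intro a b h
  exact Subtype.ext (congrArg (fun z => z.1.1) h)

lemma card_CI (B : Type*) [Ring B] [Finite (CI B)] : Nat.card (CI B) = 2 ^ numBlocks B := by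
  classical
  have : Finite {e : Subring.center B // IsIdempotentElem e} := Finite.of_equiv _ (ciEquiv B)
  have : Fintype {e : Subring.center B // IsIdempotentElem e} := Fintype.ofFinite _
  rw [Nat.card_congr (ciEquiv B)]
  have e1 : {a : {e : Subring.center B // IsIdempotentElem e} // IsAtom a} ≃
      {e : B // IsBlockIdem e} :=
    { toFun a := ⟨a.1.1.1, (isAtom_iff_block a.1).1 a.2⟩
      invFun e := ⟨ciEquiv B ⟨e.1, e.2.1, e.2.2.2.1⟩, (isAtom_iff_block _).2 e.2⟩
      left_inv _ := rfl
      right_inv _ := rfl }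
  have e2 : {e : Subring.center B // IsIdempotentElem e} ≃
      Set {a : {e : Subring.center B // IsIdempotentElem e} // IsAtom a} := by
    letI := Fintype.toCompleteAtomicBooleanAlgebra {e : Subring.center B // IsIdempotentElem e}
    exact CompleteAtomicBooleanAlgebra.toSetOfIsAtom.toEquiv
  rw [Nat.card_congr e2, Nat.card_congr (Equiv.Set.congr e1), numBlocks]
  have : Finite {e : B // IsBlockIdem e} := Finite.of_equiv _ e1
  have : Fintype {e : B // IsBlockIdem e} := Fintype.ofFinite _
  rw [Nat.card_eq_fintype_card, Nat.card_eq_fintype_card, Fintype.card_set]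

lemma ci_surj {B C : Type*} [Ring B] [Ring C] [Finite (CI B)] [Finite (CI C)] (φ : B →+* C)
    (hφ : Function.Injective φ)
    (hc : ∀ e : B, (∀ x, e * x = x * e) → ∀ y, φ e * y = y * φ e)
    (hn : numBlocks B = numBlocks C) (f : C) (hf : IsIdempotentElem f)
    (hfc : ∀ y, f * y = y * f) : ∃ e, φ e = f := by
  let F : CI B → CI C := fun e => ⟨φ e.1, e.2.1.map φ, hc _ e.2.2⟩
  have hF : Function.Injective F := fun a b h =>
    Subtype.ext (hφ (congrArg Subtype.val h))
  have hb := (Nat.bijective_iff_injective_and_card F).2 ⟨hF, by rw [card_CI, card_CI, hn]⟩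
  obtain ⟨e, he⟩ := hb.2 ⟨f, hf, hfc⟩
  exact ⟨e.1, congrArg Subtype.val he⟩

lemma blockBij_of {B C : Type*} [Ring B] [Ring C] (φ : B →+* C)
    (hφ : Function.Injective φ)
    (hc : ∀ e : B, (∀ x, e * x = x * e) → ∀ y, φ e * y = y * φ e)
    (hs : ∀ f : C, IsIdempotentElem f → (∀ y, f * y = y * f) → ∃ e, φ e = f) :
    BlockBijective φ := by
  have hidem : ∀ e, IsIdempotentElem (φ e) → IsIdempotentElem e := fun e h =>
    hφ (by rw [map_mul]; exact h)
  have hcen : ∀ e, (∀ y, φ e * y = y * φ e) → ∀ x, e * x = x * e := fun e h x =>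
    hφ (by rw [map_mul, map_mul]; exact h _)
  have h0 : ∀ e, φ e = 0 → e = 0 := fun e h => hφ (by rw [h, map_zero])
  refine ⟨?_, hφ.injOn, ?_⟩
  · rintro e ⟨h1, h2, h3, h4⟩
    refine ⟨h1.map φ, fun h => h2 (h0 e h), hc e h3, ?_⟩
    intro f g hf hg hff hgg hfg hsum
    obtain ⟨f, rfl⟩ := hs f hff hf
    obtain ⟨g, rfl⟩ := hs g hgg hg
    rcases h4 f g (hcen _ hf) (hcen _ hg) (hidem _ hff) (hidem _ hgg)
      (h0 _ (by rw [map_mul, hfg])) (hφ (by rw [map_add, hsum])) with rfl | rfl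
    · left; simp
    · right; simp
  · rintro e ⟨h1, h2, h3, h4⟩
    obtain ⟨e, rfl⟩ := hs e h1 h3
    refine ⟨e, ⟨hidem _ h1, fun h => h2 (by simp [h]), hcen _ h3, ?_⟩, rfl⟩
    intro f g hf hg hff hgg hfg hsum
    rcases h4 (φ f) (φ g) (hc _ hf) (hc _ hg) (hff.map φ) (hgg.map φ)
      (by rw [← map_mul, hfg, map_zero]) (by rw [← map_add, hsum]) with h | h
    · exact Or.inl (h0 _ h)
    · exact Or.inr (h0 _ h)

lemma ff_div (R : Type*) [CommRing R] (S : Type*) [CommRing S]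
    [Algebra R S] [Module.FaithfullyFlat R S]
    (A : Type*) [Ring A] [Algebra R A] (r : R) (a : A) (e : S ⊗[R] A)
    (h : r • e = 1 ⊗ₜ a) : ∃ b, a = r • b := by
  let N : Submodule R A := LinearMap.range (r • (LinearMap.id : A →ₗ[R] A))
  have hz : r • N.mkQ = 0 := by
    ext x
    simp only [LinearMap.smul_apply, LinearMap.zero_apply, ← map_smul]
    simp only [Submodule.mkQ_apply, Submodule.Quotient.mk_eq_zero]
    exact ⟨x, rfl⟩
  have h1 : (1 : S) ⊗ₜ[R] N.mkQ a = 0 := by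
    rw [← LinearMap.lTensor_tmul, ← h, map_smul, ← LinearMap.smul_apply,
      ← LinearMap.lTensor_smul, hz]
    simp
  have h2 := (Module.FaithfullyFlat.one_tmul_eq_zero_iff R _ _).1 h1
  rw [Submodule.mkQ_apply, Submodule.Quotient.mk_eq_zero] at h2
  obtain ⟨b, hb⟩ := h2
  exact ⟨b, hb.symm⟩

lemma central_one_tmul (R S A : Type*) [CommRing R] [CommRing S] [Algebra R S] [Ring A]
    [Algebra R A] (e : A) (h : ∀ x, e * x = x * e) (y : S ⊗[R] A) :
    ((1 : S) ⊗ₜ[R] e) * y = y * (1 ⊗ₜ e) := by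
  induction y with
  | zero => simp
  | add x y hx hy => rw [mul_add, add_mul, hx, hy]
  | tmul s a => simp [h]

lemma frac_form (R A : Type*) [CommRing R] [IsDomain R] [Ring A] [Algebra R A]
    (x : FractionRing R ⊗[R] A) : ∃ r : R, r ≠ 0 ∧ ∃ a : A, r • x = 1 ⊗ₜ a := by
  induction x with
  | zero => exact ⟨1, one_ne_zero, 0, by simp⟩
  | add x y hx hy =>
    obtain ⟨r, hr, a, h⟩ := hx
    obtain ⟨s, hs, b, h'⟩ := hy
    refine ⟨s * r, mul_ne_zero hs hr, s • a + r • b, ?_⟩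
    rw [smul_add, mul_smul, h, mul_comm, mul_smul, h', tmul_add, tmul_smul, tmul_smul]
  | tmul k a =>
    obtain ⟨⟨n, d⟩, h⟩ := IsLocalization.surj (nonZeroDivisors R) k
    refine ⟨d, nonZeroDivisors.ne_zero d.2, n • a, ?_⟩
    rw [smul_tmul', tmul_smul, smul_tmul', Algebra.smul_def, mul_comm, h, Algebra.smul_def, mul_one]

lemma smul_cancel (R M : Type*) [CommRing R] [IsDomain R] [AddCommGroup M] [Module R M]
    [Module.Flat R M] (r : R) (hr : r ≠ 0) (x y : M) (h : r • x = r • y) : x = y :=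
  smul_right_injective M hr h

theorem stmt13 (R : Type u) [CommRing R] [IsDomain R] (S : Type u) [CommRing S] [IsDomain S]
    [Algebra R S] [Module.FaithfullyFlat R S]
    (A : Type u) [Ring A] [Algebra R A] [Module.Finite R A] [Module.Flat R A]
    (hnum : numBlocks (FractionRing R ⊗[R] A) =
      numBlocks (FractionRing S ⊗[S] (S ⊗[R] A))) :
    BlockBijective ⇑(Algebra.TensorProduct.includeRight : A →ₐ[R] S ⊗[R] A) := by
  have hRS : Function.Injective (algebraMap R S) := FaithfulSMul.algebraMap_injective R S
  have hinjS : Function.Injective (Algebra.TensorProduct.includeRight : A →ₐ[R] S ⊗[R] A) :=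
    Module.FaithfullyFlat.tensorProduct_mk_injective (A := R) (B := S) A
  have hinjL : Function.Injective (Algebra.TensorProduct.includeRight :
      (S ⊗[R] A) →ₐ[S] FractionRing S ⊗[S] (S ⊗[R] A)) :=
    Algebra.TensorProduct.includeRight_injective
      (IsFractionRing.injective S (FractionRing S))
  have hRL : Function.Injective (algebraMap R (FractionRing S)) := by
    rw [IsScalarTower.algebraMap_eq R S (FractionRing S)]
    exact (IsFractionRing.injective S (FractionRing S)).comp hRS
  have := finite_CI (FractionRing R) (FractionRing R ⊗[R] A)
  have := finite_CI (FractionRing S) (FractionRing S ⊗[S] (S ⊗[R] A))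
  let κ : FractionRing R →ₐ[R] FractionRing S :=
    IsFractionRing.liftAlgHom (g := Algebra.ofId R (FractionRing S)) hRL
  let ι : A →ₐ[R] FractionRing S ⊗[S] (S ⊗[R] A) :=
    ((Algebra.TensorProduct.includeRight :
      (S ⊗[R] A) →ₐ[S] FractionRing S ⊗[S] (S ⊗[R] A)).restrictScalars R).comp
      Algebra.TensorProduct.includeRight
  let lam : FractionRing R →ₐ[R] FractionRing S ⊗[S] (S ⊗[R] A) :=
    ((Algebra.TensorProduct.includeLeft :
      FractionRing S →ₐ[S] FractionRing S ⊗[S] (S ⊗[R] A)).restrictScalars R).comp κ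
  let ψ : FractionRing R ⊗[R] A →ₐ[R] FractionRing S ⊗[S] (S ⊗[R] A) :=
    Algebra.TensorProduct.lift lam ι (fun k a => by
      show ((κ k) ⊗ₜ 1) * (1 ⊗ₜ (1 ⊗ₜ a)) = (1 ⊗ₜ (1 ⊗ₜ a)) * ((κ k) ⊗ₜ 1)
      simp)
  have hψa : ∀ a : A, ψ (1 ⊗ₜ a) = 1 ⊗ₜ (1 ⊗ₜ a) := fun a => by
    simp [ψ, ι]
  have hιinj : ∀ a b : A, (1 : FractionRing S) ⊗ₜ[S] ((1 : S) ⊗ₜ[R] a) = 1 ⊗ₜ (1 ⊗ₜ b) → a = b :=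
    fun a b h => hinjS (hinjL h)
  have hψ : Function.Injective ψ := by
    rw [injective_iff_map_eq_zero]
    intro x hx
    obtain ⟨r, hr, a, h⟩ := frac_form R A x
    have h1 : ψ (1 ⊗ₜ a) = 0 := by rw [← h, map_smul, hx, smul_zero]
    have ha : a = 0 := hιinj a 0 (by rw [← hψa, h1]; simp)
    exact smul_cancel R _ r hr _ _ (by rw [h, ha]; simp) |>.trans rfl
  have hcen : ∀ e, (∀ x, e * x = x * e) → ∀ y, ψ e * y = y * ψ e := by
    intro e he y
    induction y with
    | zero => simp
    | add x y hx hy => rw [mul_add, add_mul, hx, hy]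
    | tmul l z =>
      induction z with
      | zero => simp
      | add x y hx hy => rw [tmul_add, mul_add, add_mul, hx, hy]
      | tmul s a =>
        have h1 : l ⊗ₜ[S] (s ⊗ₜ[R] a) = algebraMap (FractionRing S)
            (FractionRing S ⊗[S] (S ⊗[R] A)) (s • l) * ψ (1 ⊗ₜ a) := by
          rw [hψa, Algebra.TensorProduct.algebraMap_apply, Algebra.TensorProduct.tmul_mul_tmul,
            mul_one, one_mul, Algebra.algebraMap_self, RingHom.id_apply, smul_tmul, smul_tmul',
            smul_eq_mul, mul_one]
        rw [h1, ← mul_assoc, ← Algebra.commutes, mul_assoc, mul_assoc, ← map_mul, he, map_mul]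
  refine blockBij_of (Algebra.TensorProduct.includeRight : A →ₐ[R] S ⊗[R] A).toRingHom hinjS
    (fun e he y => central_one_tmul R S A e he y) ?_
  intro f hf hfc
  obtain ⟨x, hx⟩ := ci_surj ψ.toRingHom hψ hcen hnum (1 ⊗ₜ f)
    (hf.map (Algebra.TensorProduct.includeRight :
      (S ⊗[R] A) →ₐ[S] FractionRing S ⊗[S] (S ⊗[R] A)))
    (central_one_tmul S (FractionRing S) _ f hfc)
  replace hx : ψ x = 1 ⊗ₜ f := hx
  obtain ⟨r, hr, a, h⟩ := frac_form R A x
  have h1 : r • f = 1 ⊗ₜ a := by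
    apply hinjL
    show (1 : FractionRing S) ⊗ₜ[S] (r • f) = 1 ⊗ₜ (1 ⊗ₜ a)
    rw [← hψa, ← h, map_smul, hx]
    rw [← algebraMap_smul S r f, tmul_smul, algebraMap_smul]
  obtain ⟨b, rfl⟩ := ff_div R S A r a f h1
  refine ⟨b, ?_⟩
  show (1 : S) ⊗ₜ b = f
  rw [tmul_smul] at h1
  have hrS : algebraMap R S r ≠ 0 := fun h => hr (hRS (by rw [h, map_zero]))
  refine smul_cancel S (S ⊗[R] A) _ hrS _ _ ?_
  rw [algebraMap_smul, algebraMap_smul, h1]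
end

section
/- Every non-zero algebra A over an integral domain R that is finitely generated and flat as an R-module has a block decomposition: the identity 1 of A is a sum of finitely many pairwise orthogonal centrally-primitive idempotents of A. (The ring R is not assumed noetherian.) -/
/-- auxiliary: finite set of nonzero central orthogonal idempotents with sum one -/
def GoodSet {A : Type*} [Ring A] (s : Finset A) : Prop :=
  (∀ e ∈ s, IsIdempotentElem e ∧ e ≠ 0 ∧ ∀ x : A, e * x = x * e) ∧
      (∀ e ∈ s, ∀ f ∈ s, e ≠ f → e * f = 0) ∧ ∑ e ∈ s, e = 1

theorem goodSet_card_le (R : Type*) [CommRing R] [IsDomain R]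
    (A : Type*) [Ring A] [Algebra R A]
    [Module.Finite R A] [Module.Flat R A] (s : Finset A) (hs : GoodSet s) :
    s.card ≤ Module.finrank R A := by
  classical
  have hli : LinearIndependent R (fun x : s => (x : A)) := by
    rw [Fintype.linearIndependent_iff]
    intro g hg i
    have h1 : (∑ j : s, g j • (j : A)) * (i : A) = g i • (i : A) := by
      rw [Finset.sum_mul, Finset.sum_eq_single i]
      · rw [smul_mul_assoc, (hs.1 i i.2).1.eq]
      · intro j _ hj
        rw [smul_mul_assoc, hs.2.1 j j.2 i i.2 (fun h => hj (Subtype.ext h)), smul_zero]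
      · simp
    rw [hg, zero_mul] at h1
    exact (smul_eq_zero.mp h1.symm).resolve_right (hs.1 i i.2).2.1
  simpa using hli.fintype_card_le_finrank

theorem goodSet_refine {A : Type*} [Ring A] (s : Finset A) (hs : GoodSet s)
    (hn : ¬ ∀ e ∈ s, IsBlockIdem e) : ∃ t : Finset A, GoodSet t ∧ s.card < t.card := by
  classical
  push Not at hn
  obtain ⟨e, hes, hne⟩ := hn
  obtain ⟨h1, h2, h3⟩ := hs
  obtain ⟨he, he0, hec⟩ := h1 e hes
  have : ∃ f g : A, (∀ x : A, f * x = x * f) ∧ (∀ x : A, g * x = x * g) ∧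
      IsIdempotentElem f ∧ IsIdempotentElem g ∧ f * g = 0 ∧ f + g = e ∧ f ≠ 0 ∧ g ≠ 0 := by
    by_contra hcon
    apply hne
    refine ⟨he, he0, hec, fun f g a b c d k l => ?_⟩
    by_contra h
    push Not at h
    exact hcon ⟨f, g, a, b, c, d, k, l, h.1, h.2⟩
  obtain ⟨f, g, hfc, hgc, hf, hg, hfg, hfge, hf0, hg0⟩ := this
  have hgf : g * f = 0 := by rw [← hfc, hfg]
  have hfe : f * e = f := by rw [← hfge, mul_add, hf.eq, hfg, add_zero]
  have hge : g * e = g := by rw [← hfge, mul_add, hg.eq, hgf, zero_add]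
  have hfx : ∀ x ∈ s.erase e, f * x = 0 := by
    intro x hx
    rw [Finset.mem_erase] at hx
    rw [← hfe, mul_assoc, h2 e hes x hx.2 hx.1.symm, mul_zero]
  have hgx : ∀ x ∈ s.erase e, g * x = 0 := by
    intro x hx
    rw [Finset.mem_erase] at hx
    rw [← hge, mul_assoc, h2 e hes x hx.2 hx.1.symm, mul_zero]
  have hgn : g ∉ s.erase e := fun h => hg0 (by rw [← hg.eq, hgx g h])
  have hfn : f ∉ insert g (s.erase e) := by
    rw [Finset.mem_insert]
    rintro (h | h)
    · exact hf0 (by rw [← hf.eq]; nth_rewrite 2 [h]; exact hfg)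
    · exact hf0 (by rw [← hf.eq, hfx f h])
  refine ⟨insert f (insert g (s.erase e)), ⟨?_, ?_, ?_⟩, ?_⟩
  · intro x hx
    rw [Finset.mem_insert, Finset.mem_insert] at hx
    rcases hx with rfl | rfl | hx
    · exact ⟨hf, hf0, hfc⟩
    · exact ⟨hg, hg0, hgc⟩
    · exact h1 x (Finset.mem_of_mem_erase hx)
  · intro x hx y hy hxy
    rw [Finset.mem_insert, Finset.mem_insert] at hx hy
    rcases hx with rfl | rfl | hx <;> rcases hy with rfl | rfl | hy
    · exact absurd rfl hxy
    · exact hfg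
    · exact hfx y hy
    · exact hgf
    · exact absurd rfl hxy
    · exact hgx y hy
    · rw [← hfc, hfx x hx]
    · rw [← hgc, hgx x hx]
    · exact h2 x (Finset.mem_of_mem_erase hx) y (Finset.mem_of_mem_erase hy) hxy
  · rw [Finset.sum_insert hfn, Finset.sum_insert hgn, ← add_assoc, hfge,
      Finset.add_sum_erase s (fun x => x) hes, h3]
  · rw [Finset.card_insert_of_notMem hfn, Finset.card_insert_of_notMem hgn,
      Finset.card_erase_of_mem hes]
    omega

/-- **Corollary `finite_flat_int_block_dec`.** A nonzero finite flat algebra over an integral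
domain (not necessarily noetherian) has a block decomposition: `1` is a finite sum of pairwise
orthogonal centrally-primitive idempotents. -/
theorem stmt14 (R : Type u) [CommRing R] [IsDomain R]
    (A : Type v) [Ring A] [Algebra R A] [Nontrivial A]
    [Module.Finite R A] [Module.Flat R A] :
    ∃ s : Finset A, (∀ e ∈ s, IsBlockIdem e) ∧
      (∀ e ∈ s, ∀ f ∈ s, e ≠ f → e * f = 0) ∧ ∑ e ∈ s, e = 1 := by
  by_contra hcon
  have key : ∀ n : ℕ, ∃ s : Finset A, GoodSet s ∧ n ≤ s.card := by
    intro n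
    induction n with
    | zero =>
      refine ⟨{1}, ⟨?_, ?_, by simp⟩, Nat.zero_le _⟩
      · intro e he
        rw [Finset.mem_singleton] at he
        subst he
        exact ⟨IsIdempotentElem.one, one_ne_zero, fun x => by simp⟩
      · intro e he f hf hef
        rw [Finset.mem_singleton] at he hf
        exact absurd (he.trans hf.symm) hef
    | succ n ih =>
      obtain ⟨s, hs, hn⟩ := ih
      obtain ⟨t, ht, hst⟩ := goodSet_refine s hs (fun h => hcon ⟨s, h, hs.2.1, hs.2.2⟩)
      exact ⟨t, ht, by omega⟩
  obtain ⟨s, hs, hn⟩ := key (Module.finrank R A + 1)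
  have := goodSet_card_le R A s hs
  omega
end

section
/- Let A be a finite-dimensional algebra over a field K. If the center Z(A) is a split K-algebra (in particular, if A itself splits), then A is block-split: the number of block idempotents of A equals the number of block idempotents of L ⊗_K A for every field extension L of K. Conversely, if K is perfect and A is block-split, then Z(A) is a split K-algebra. -/
open TensorProduct

/-- An algebra over a field `K` is block-split if its number of blocks is unchanged under every
field extension of `K`. -/
def IsBlockSplit (K : Type u) (B : Type v) [Field K] [Ring B] [Algebra K B] : Prop :=
  ∀ (L : Type u) [Field L] [Algebra K L], numBlocks B = numBlocks (L ⊗[K] B)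

lemma blk_iff {R B : Type*} [CommRing R] [Ring B] (φ : R →+* B) (hi : Function.Injective φ)
    (hr : ∀ b : B, (∀ x : B, b * x = x * b) ↔ ∃ r, φ r = b) (e : R) :
    IsBlockIdem (φ e) ↔ ∃ h : IsIdempotentElem e, IsAtom (⟨e, h⟩ : {a : R // IsIdempotentElem a}) := by
  have hidem : ∀ r : R, IsIdempotentElem (φ r) ↔ IsIdempotentElem r := by
    intro r
    constructor
    · intro h
      apply hi
      rw [map_mul]
      exact h
    · intro h
      exact h.map φ
  constructor
  · rintro ⟨h1, h2, h3, h4⟩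
    have he := (hidem e).1 h1
    refine ⟨he, ?_, ?_⟩
    · intro h
      apply h2
      have : e = 0 := congrArg Subtype.val h
      rw [this, map_zero]
    · rintro ⟨f, hf⟩ hlt
      have hle : f * e = f := congrArg Subtype.val (inf_eq_left.2 hlt.le)
      have hne : f ≠ e := fun h => hlt.ne (Subtype.ext h)
      have hff : f * f = f := hf
      have hee : e * e = e := he
      have hg : IsIdempotentElem (e - f) := by
        change (e - f) * (e - f) = e - f
        linear_combination hff + hee - 2 * hle
      rcases h4 (φ f) (φ (e - f)) ((hr _).2 ⟨_, rfl⟩) ((hr _).2 ⟨_, rfl⟩) ((hidem _).2 hf)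
        ((hidem _).2 hg) (by
          rw [← map_mul, mul_sub, hle, hff, sub_self, map_zero]) (by simp) with h | h
      · exact Subtype.ext ((map_eq_zero_iff φ hi).1 h)
      · exact absurd (sub_eq_zero.1 ((map_eq_zero_iff φ hi).1 h)).symm hne
  · rintro ⟨he, hb, hat⟩
    refine ⟨(hidem e).2 he, ?_, (hr _).2 ⟨_, rfl⟩, ?_⟩
    · intro h
      exact hb (Subtype.ext ((map_eq_zero_iff φ hi).1 h))
    · intro f g hf hg hf2 hg2 hfg hs
      obtain ⟨f, rfl⟩ := (hr _).1 hf
      obtain ⟨g, rfl⟩ := (hr _).1 hg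
      rw [hidem] at hf2 hg2
      rw [← map_mul, map_eq_zero_iff φ hi] at hfg
      rw [← map_add] at hs
      have hs := hi hs
      by_cases h : f = e
      · right
        rw [h] at hs
        rw [add_eq_left.1 hs, map_zero]
      · left
        have hff : f * f = f := hf2
        have : (⟨f, hf2⟩ : {a : R // IsIdempotentElem a}) < ⟨e, he⟩ := by
          refine lt_of_le_of_ne (inf_eq_left.1 (Subtype.ext ?_)) (fun h' => h (congrArg Subtype.val h'))
          change f * e = f
          rw [← hs, mul_add, hff, hfg, add_zero]
        have h0 : f = 0 := congrArg Subtype.val (hat _ this)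
        rw [h0, map_zero]

def clopensIso (X : Type*) [TopologicalSpace X] [DiscreteTopology X] :
    TopologicalSpace.Clopens X ≃o Set X where
  toFun s := s
  invFun s := ⟨s, isClopen_discrete s⟩
  left_inv _ := rfl
  right_inv _ := rfl
  map_rel_iff' := Iff.rfl

lemma numBlocks_eq {R B : Type*} [CommRing R] [IsArtinianRing R] [Ring B] (φ : R →+* B)
    (hi : Function.Injective φ)
    (hr : ∀ b : B, (∀ x : B, b * x = x * b) ↔ ∃ r, φ r = b) :
    numBlocks B = Nat.card (PrimeSpectrum R) := by
  let I : {a : R // IsIdempotentElem a} ≃o Set (PrimeSpectrum R) :=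
    PrimeSpectrum.isIdempotentElemEquivClopens.trans (clopensIso _)
  have hI : ∀ p, IsAtom (I.symm {p}) := fun p => (I.symm.isAtom_iff _).2 (Set.isAtom_singleton p)
  symm
  refine Nat.card_congr (Equiv.ofBijective
    (fun p => ⟨φ (I.symm {p}).1, (blk_iff φ hi hr _).2 ⟨(I.symm {p}).2, hI p⟩⟩) ⟨?_, ?_⟩)
  · intro p q h
    have h1 := hi (congrArg Subtype.val h)
    exact Set.singleton_injective (I.symm.injective (Subtype.ext h1))
  · rintro ⟨b, hb⟩
    obtain ⟨e, rfl⟩ := (hr b).1 hb.2.2.1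
    obtain ⟨he, hat⟩ := (blk_iff φ hi hr e).1 hb
    obtain ⟨p, hp⟩ := Set.isAtom_iff.1 ((I.isAtom_iff _).2 hat)
    refine ⟨p, Subtype.ext ?_⟩
    change φ (I.symm {p}).1 = φ e
    rw [← hp, I.symm_apply_apply]

section
variable (K : Type*) [Field K] (A : Type*) [Ring A] [Algebra K A] [FiniteDimensional K A]

lemma numBlocks_base : numBlocks A = Nat.card (PrimeSpectrum (Subalgebra.center K A)) := by
  have : IsArtinianRing (Subalgebra.center K A) := IsArtinianRing.of_finite K _
  refine numBlocks_eq (Subalgebra.center K A).val.toRingHom Subtype.val_injective ?_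
  intro b
  constructor
  · intro h
    exact ⟨⟨b, Subalgebra.mem_center_iff.2 fun x => (h x).symm⟩, rfl⟩
  · rintro ⟨r, rfl⟩ x
    exact (Subalgebra.mem_center_iff.1 r.2 x).symm

lemma numBlocks_ext (L : Type*) [Field L] [Algebra K L] :
    numBlocks (L ⊗[K] A) = Nat.card (PrimeSpectrum (L ⊗[K] Subalgebra.center K A)) := by
  have : IsArtinianRing (L ⊗[K] Subalgebra.center K A) := IsArtinianRing.of_finite L _
  have hrange := Subalgebra.centralizer_range_includeRight_eq_center_tensorProduct K L A
  refine numBlocks_eq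
    (Algebra.TensorProduct.map (AlgHom.id K L) (Subalgebra.center K A).val).toRingHom ?_ ?_
  · exact Module.Flat.lTensor_preserves_injective_linearMap (M := L)
      (Subalgebra.center K A).val.toLinearMap Subtype.val_injective
  · intro b
    constructor
    · intro h
      have : b ∈ (Algebra.TensorProduct.map (AlgHom.id K L) (Subalgebra.center K A).val).range := by
        rw [← hrange, Subalgebra.mem_centralizer_iff]
        intro g _
        exact (h g).symm
      exact this
    · rintro ⟨r, rfl⟩ x
      change (Algebra.TensorProduct.map (AlgHom.id K L) (Subalgebra.center K A).val) r * x = 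
        x * (Algebra.TensorProduct.map (AlgHom.id K L) (Subalgebra.center K A).val) r
      induction r using TensorProduct.induction_on with
      | zero => simp
      | add a b ha hb => simp only [map_add, add_mul, mul_add, ha, hb]
      | tmul l z =>
        induction x using TensorProduct.induction_on with
        | zero => simp
        | add a b ha hb => simp only [add_mul, mul_add, ha, hb]
        | tmul m a =>
          simp [mul_comm l m, Subalgebra.mem_center_iff.1 z.2 a]
end

section
variable (K : Type u) [Field K] (Z : Type v) [CommRing Z] [Algebra K Z]

lemma split_iff [FiniteDimensional K Z] : IsSplitAlgebra K Z ↔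
    ∀ p : Ideal Z, p.IsPrime → ∀ z : Z, ∃ k : K, z - algebraMap K Z k ∈ p := by
  have : IsArtinianRing Z := IsArtinianRing.of_finite K _
  constructor
  · intro h p hp z
    have : p.IsMaximal := Ideal.IsPrime.isMaximal' hp
    obtain ⟨k, hk⟩ := h (Z ⧸ p) (isSimpleModule_iff_isCoatom.2 Ideal.IsMaximal.out) (LinearMap.lsmul Z (Z ⧸ p) z)
    refine ⟨k, ?_⟩
    have := hk 1
    rw [← Ideal.Quotient.eq]
    simpa [Algebra.smul_def] using this
  · intro h S _ _ hS f
    have := hS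
    have := IsSimpleModule.nontrivial Z S
    obtain ⟨s, hs⟩ := exists_ne (0 : S)
    have hspan := IsSimpleModule.toSpanSingleton_surjective Z hs
    have hm : Ideal.IsMaximal (LinearMap.ker (LinearMap.toSpanSingleton Z S s)) :=
      IsSimpleModule.ker_toSpanSingleton_isMaximal Z hs
    obtain ⟨z, hz⟩ := hspan (f s)
    obtain ⟨k, hk⟩ := h _ hm.isPrime z
    refine ⟨k, fun t => ?_⟩
    obtain ⟨y, rfl⟩ := hspan t
    simp only [LinearMap.mem_ker, LinearMap.toSpanSingleton_apply, sub_smul, sub_eq_zero] at hk hz ⊢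
    rw [map_smul, ← hz, hk, smul_comm]

variable (L : Type*) [Field L] [Algebra K L]

abbrev incl : Z →+* L ⊗[K] Z := (Algebra.TensorProduct.includeRight : Z →ₐ[K] L ⊗[K] Z).toRingHom

lemma comap_surj : Function.Surjective (PrimeSpectrum.comap (incl K Z L)) := by
  have h : Function.Surjective (PrimeSpectrum.comap (algebraMap Z (Z ⊗[K] L))) :=
    PrimeSpectrum.comap_surjective_of_faithfullyFlat
  intro p
  obtain ⟨q, rfl⟩ := h p
  refine ⟨PrimeSpectrum.comap (Algebra.TensorProduct.comm K L Z).toRingEquiv.toRingHom q, ?_⟩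
  rw [← PrimeSpectrum.comap_comp_apply]
  congr 1
  

lemma comap_inj (h : ∀ p : Ideal Z, p.IsPrime → ∀ z : Z, ∃ k : K, z - algebraMap K Z k ∈ p) :
    Function.Injective (PrimeSpectrum.comap (incl K Z L)) := by
  have key : ∀ (P Q : PrimeSpectrum (L ⊗[K] Z)),
      PrimeSpectrum.comap (incl K Z L) P = PrimeSpectrum.comap (incl K Z L) Q →
      P.asIdeal ≤ Q.asIdeal := by
    intro P Q hPQ x hx
    have hmem : ∀ z : Z, (1 : L) ⊗ₜ[K] z ∈ P.asIdeal ↔ (1 : L) ⊗ₜ[K] z ∈ Q.asIdeal := fun z => 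
      (SetLike.ext_iff.1 (congrArg PrimeSpectrum.asIdeal hPQ) z)
    have hx2 : ∃ l : L, x - l ⊗ₜ[K] (1 : Z) ∈ P.asIdeal ∧ x - l ⊗ₜ[K] (1 : Z) ∈ Q.asIdeal := by
      clear hx
      induction x using TensorProduct.induction_on with
      | zero => exact ⟨0, by simp⟩
      | add a b ha hb =>
        obtain ⟨l, h1, h2⟩ := ha
        obtain ⟨m, h3, h4⟩ := hb
        refine ⟨l + m, ?_⟩
        rw [TensorProduct.add_tmul, add_sub_add_comm]
        exact ⟨add_mem h1 h3, add_mem h2 h4⟩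
      | tmul l z =>
        obtain ⟨k, hk⟩ := h _ (PrimeSpectrum.comap (incl K Z L) P).isPrime z
        have hk1 : (1 : L) ⊗ₜ[K] (z - algebraMap K Z k) ∈ P.asIdeal := hk
        have hk2 := (hmem _).1 hk1
        refine ⟨k • l, ?_⟩
        have : l ⊗ₜ[K] z - (k • l) ⊗ₜ[K] (1 : Z) =
            (l ⊗ₜ[K] (1 : Z)) * ((1 : L) ⊗ₜ[K] (z - algebraMap K Z k)) := by
          rw [Algebra.TensorProduct.tmul_mul_tmul, mul_one, one_mul, TensorProduct.tmul_sub,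
            Algebra.algebraMap_eq_smul_one, TensorProduct.tmul_smul, TensorProduct.smul_tmul']
        rw [this]
        exact ⟨Ideal.mul_mem_left _ _ hk1, Ideal.mul_mem_left _ _ hk2⟩
    obtain ⟨l, h1, h2⟩ := hx2
    have hl : l ⊗ₜ[K] (1 : Z) ∈ P.asIdeal := by simpa using sub_mem hx h1
    have hl0 : l = 0 := by
      by_contra hne
      apply P.isPrime.ne_top
      apply Ideal.eq_top_of_isUnit_mem _ hl
      exact (IsUnit.mk0 l hne).map (Algebra.TensorProduct.includeLeft : L →ₐ[K] L ⊗[K] Z)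
    simpa [hl0] using h2
  intro P Q hPQ
  exact PrimeSpectrum.ext (le_antisymm (key P Q hPQ) (key Q P hPQ.symm))

lemma split_of_inj [FiniteDimensional K Z] [PerfectField K] [IsAlgClosed L]
    (hinj : Function.Injective (PrimeSpectrum.comap (incl K Z L))) (p : Ideal Z) (hp : p.IsPrime)
    (z : Z) : ∃ k : K, z - algebraMap K Z k ∈ p := by
  have : IsArtinianRing Z := IsArtinianRing.of_finite K _
  have : p.IsMaximal := Ideal.IsPrime.isMaximal' hp
  let : Field (Z ⧸ p) := Ideal.Quotient.field p
  have : FiniteDimensional K (Z ⧸ p) := inferInstance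
  have hsub : Subsingleton ((Z ⧸ p) →ₐ[K] L) := by
    constructor
    intro σ τ
    let ev : ((Z ⧸ p) →ₐ[K] L) → (L ⊗[K] Z →ₐ[K] L) := fun σ =>
      Algebra.TensorProduct.lift (AlgHom.id K L) (σ.comp (Ideal.Quotient.mkₐ K p))
        (fun _ _ => Commute.all _ _)
    have hev : ∀ σ l z, ev σ (l ⊗ₜ z) = l * σ (Ideal.Quotient.mk p z) := by
      intro σ l z
      simp [ev]
    let Q : ((Z ⧸ p) →ₐ[K] L) → PrimeSpectrum (L ⊗[K] Z) := fun σ =>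
      ⟨RingHom.ker (ev σ), RingHom.ker_isPrime _⟩
    have hQ : ∀ σ, (PrimeSpectrum.comap (incl K Z L) (Q σ)).asIdeal = p := by
      intro σ
      ext y
      change ev σ (1 ⊗ₜ y) = 0 ↔ _
      rw [hev, one_mul, map_eq_zero_iff σ σ.injective, Ideal.Quotient.eq_zero_iff_mem]
    have hQQ : Q σ = Q τ := hinj (PrimeSpectrum.ext ((hQ σ).trans (hQ τ).symm))
    ext y
    obtain ⟨y, rfl⟩ := Ideal.Quotient.mk_surjective y
    have h1 : (σ (Ideal.Quotient.mk p y)) ⊗ₜ[K] (1 : Z) - (1 : L) ⊗ₜ[K] y ∈ (Q σ).asIdeal := by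
      change ev σ _ = 0
      rw [map_sub, hev, hev]
      simp
    rw [hQQ] at h1
    have h2 : ev τ _ = 0 := h1
    rw [map_sub, hev, hev] at h2
    simpa [sub_eq_zero] using h2
  have hcard := AlgHom.card K (Z ⧸ p) L
  have hfr : Module.finrank K (Z ⧸ p) = 1 := by
    have h1 := Fintype.card_le_one_iff_subsingleton.2 hsub
    have h2 : 0 < Module.finrank K (Z ⧸ p) := Module.finrank_pos
    omega
  have hbot := Subalgebra.bot_eq_top_iff_finrank_eq_one.2 hfr
  have hz : Ideal.Quotient.mk p z ∈ (⊥ : Subalgebra K (Z ⧸ p)) := hbot ▸ Algebra.mem_top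
  obtain ⟨k, hk⟩ := Algebra.mem_bot.1 hz
  exact ⟨k, Ideal.Quotient.eq.1 hk.symm⟩
end

/-- **Lemma `split_center_lemma`.** If the center of a finite-dimensional `K`-algebra `A` is a
split `K`-algebra then `A` is block-split; conversely, if `K` is perfect and `A` is block-split
then its center is split. -/
theorem stmt16 (K : Type u) [Field K] (A : Type u) [Ring A] [Algebra K A]
    [FiniteDimensional K A] :
    (IsSplitAlgebra K (Subalgebra.center K A) → IsBlockSplit K A) ∧
    (PerfectField K → IsBlockSplit K A → IsSplitAlgebra K (Subalgebra.center K A)) := by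
  constructor
  · intro h L _ _
    rw [numBlocks_base K A, numBlocks_ext K A L]
    exact (Nat.card_congr (Equiv.ofBijective _
      ⟨comap_inj K _ L ((split_iff K _).1 h), comap_surj K _ L⟩)).symm
  · intro hK h
    refine (split_iff K _).2 ?_
    have hL := h (AlgebraicClosure K)
    rw [numBlocks_base K A, numBlocks_ext K A] at hL
    have : IsArtinianRing (AlgebraicClosure K ⊗[K] Subalgebra.center K A) :=
      IsArtinianRing.of_finite (AlgebraicClosure K) _
    apply split_of_inj K _ (AlgebraicClosure K)
    exact ((Nat.bijective_iff_surjective_and_card _).2 ⟨comap_surj K _ _, hL.symm⟩).1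
end
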